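/- Let d ∈ {2,3} and let A_d := (0,1) if d = 2 and A_d := (0, 1/5] if d = 3. For every α there exists a constant C_{α,d} > 0 such that the following holds for all ε > 0. Let h ∈ L^∞(𝕋^d) ∩ L^{(d+2)/d}(𝕋^d) be a probability density, let Ū ∈ C¹(𝕋^d) have zero mean and be a weak solution of ε² Δ Ū = 1 − h (i.e. ε² ∫ ∇Ū·∇φ dx = −∫ (1−h)φ dx for all smooth φ), and let Û ∈ C²(𝕋^d) satisfy ε² Δ Û = e^{Ū+Û} − 1 pointwise. Then: (a) for α ∈ (0,1), ‖Û‖_{C^{1,α}(𝕋^d)} ≤ C_{α,d} exp( C_{α,d} ε^{−2} (1 + ‖h‖_{L^{(d+2)/d}(𝕋^d)}) ); and (b) for α ∈ A_d, the second derivatives of Û are α-Hölder continuous and ‖Û‖_{C^{2,α}(𝕋^d)} ≤ C_{α,d} exp( exp( C_{α,d} ε^{−2} (1 + ‖h‖_{L^{(d+2)/d}(𝕋^d)}) ) ). -/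

import Mathlib

open MeasureTheory Real Set
open scoped ENNReal

noncomputable section

/-- The fundamental domain `[0,1)^d` of the flat torus `𝕋^d = ℝ^d/ℤ^d`. -/
def Tcube (d : ℕ) : Set (Fin d → ℝ) := Set.univ.pi fun _ => Set.Ico (0:ℝ) 1

/-- The Haar (Lebesgue) probability measure on the torus `𝕋^d`, realised as Lebesgue
measure restricted to the fundamental domain `[0,1)^d`. -/
def torusMeasure (d : ℕ) : Measure (Fin d → ℝ) := volume.restrict (Tcube d)

/-- The Euclidean norm on `ℝ^d`. -/
def euclNorm {d : ℕ} (v : Fin d → ℝ) : ℝ := Real.sqrt (∑ i, (v i) ^ 2)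

/-- The lattice vector in `ℝ^d` associated to `k ∈ ℤ^d`. -/
def latVec {d : ℕ} (k : Fin d → ℤ) : Fin d → ℝ := fun i => (k i : ℝ)

/-- `ℤ^d`-periodicity of a function on `ℝ^d`; such functions are exactly the functions
on the torus `𝕋^d`. -/
def ZPeriodic {d : ℕ} {α : Type*} (f : (Fin d → ℝ) → α) : Prop :=
  ∀ (x : Fin d → ℝ) (k : Fin d → ℤ), f (x + latVec k) = f x

/-- The quotient (flat) metric on the torus `𝕋^d`, expressed on representatives in `ℝ^d`. -/
def tdist {d : ℕ} (x y : Fin d → ℝ) : ℝ := ⨅ k : Fin d → ℤ, euclNorm (x - y + latVec k)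

/-- The gradient of a scalar function on `ℝ^d`, as an `ℝ^d`-valued function. -/
def grad {d : ℕ} (U : (Fin d → ℝ) → ℝ) (x : Fin d → ℝ) : Fin d → ℝ :=
  fun i => fderiv ℝ U x (Pi.single i 1)

/-- The Laplacian: the sum of the second partial derivatives. -/
def lap {d : ℕ} (U : (Fin d → ℝ) → ℝ) (x : Fin d → ℝ) : ℝ :=
  ∑ i, fderiv ℝ (fun y => fderiv ℝ U y (Pi.single i 1)) x (Pi.single i 1)

/-- The Hessian matrix of second partial derivatives. -/
def hess {d : ℕ} (U : (Fin d → ℝ) → ℝ) (x : Fin d → ℝ) : Fin d → Fin d → ℝ :=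
  fun i j => fderiv ℝ (fun y => fderiv ℝ U y (Pi.single j 1)) x (Pi.single i 1)

/-- Frobenius (Euclidean) norm of a `d × d` matrix. -/
def frobNorm {d : ℕ} (M : Fin d → Fin d → ℝ) : ℝ := Real.sqrt (∑ i, ∑ j, (M i j) ^ 2)

/-- Euclidean dot product on `ℝ^d`. -/
def dotP {d : ℕ} (v w : Fin d → ℝ) : ℝ := ∑ i, v i * w i

/-- `HolderBnd α u K` expresses that the Hölder norm `‖u‖_{C^{0,α}(𝕋^d)}`, i.e. the sup
norm plus the `α`-Hölder seminorm with respect to the torus metric, is at most `K`. -/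
def HolderBnd {d : ℕ} (α : ℝ) (u : (Fin d → ℝ) → ℝ) (K : ℝ) : Prop :=
  ∃ A B : ℝ, 0 ≤ A ∧ 0 ≤ B ∧ A + B ≤ K ∧ (∀ x, |u x| ≤ A) ∧
    ∀ x y, |u x - u y| ≤ B * tdist x y ^ α

/-- Hölder norm bound for an `ℝ^d`-valued function, with the Euclidean norm on values. -/
def HolderBndVec {d : ℕ} (α : ℝ) (G : (Fin d → ℝ) → Fin d → ℝ) (K : ℝ) : Prop :=
  ∃ A B : ℝ, 0 ≤ A ∧ 0 ≤ B ∧ A + B ≤ K ∧ (∀ x, euclNorm (G x) ≤ A) ∧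
    ∀ x y, euclNorm (G x - G y) ≤ B * tdist x y ^ α

/-- Hölder norm bound for a matrix-valued function. -/
def HolderBndMat {d : ℕ} (α : ℝ) (M : (Fin d → ℝ) → Fin d → Fin d → ℝ) (K : ℝ) : Prop :=
  ∃ A B : ℝ, 0 ≤ A ∧ 0 ≤ B ∧ A + B ≤ K ∧ (∀ x, frobNorm (M x) ≤ A) ∧
    ∀ x y, frobNorm (M x - M y) ≤ B * tdist x y ^ α

/-- `C1Bnd α u K` expresses `‖u‖_{C^{1,α}(𝕋^d)} ≤ K` (the `C^{0,α}` norm of `u` plus the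
`C^{0,α}` norm of its gradient is at most `K`). -/
def C1Bnd {d : ℕ} (α : ℝ) (u : (Fin d → ℝ) → ℝ) (K : ℝ) : Prop :=
  ∃ K₀ K₁ : ℝ, 0 ≤ K₀ ∧ 0 ≤ K₁ ∧ K₀ + K₁ ≤ K ∧
    HolderBnd α u K₀ ∧ HolderBndVec α (grad u) K₁

/-- `C2Bnd α u K` expresses that the second derivatives of `u` are `α`-Hölder continuous
and `‖u‖_{C^{2,α}(𝕋^d)} ≤ K`. -/
def C2Bnd {d : ℕ} (α : ℝ) (u : (Fin d → ℝ) → ℝ) (K : ℝ) : Prop :=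
  ∃ K₀ K₁ K₂ : ℝ, 0 ≤ K₀ ∧ 0 ≤ K₁ ∧ 0 ≤ K₂ ∧ K₀ + K₁ + K₂ ≤ K ∧
    HolderBnd α u K₀ ∧ HolderBndVec α (grad u) K₁ ∧ HolderBndMat α (hess u) K₂

/-- A coupling of two measures: a measure on the product whose marginals are `μ` and `ν`. -/
def IsCoupling {X : Type*} [MeasurableSpace X] (cpl : Measure (X × X)) (μ ν : Measure X) : Prop :=
  cpl.map Prod.fst = μ ∧ cpl.map Prod.snd = ν

/-- `W_q^q`: the `q`-th power of the Wasserstein distance of order `q` on the torus,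
defined as the infimum over couplings of the integral of the `q`-th power of the torus
distance. -/
def WassPow {d : ℕ} (q : ℝ) (μ ν : Measure (Fin d → ℝ)) : ℝ :=
  sInf { c | ∃ cpl : Measure ((Fin d → ℝ) × (Fin d → ℝ)), IsProbabilityMeasure cpl ∧
    IsCoupling cpl μ ν ∧ c = ∫ z, tdist z.1 z.2 ^ q ∂cpl }

/-- The Wasserstein distance of order `p` on the torus. -/
def Wass {d : ℕ} (p : ℝ) (μ ν : Measure (Fin d → ℝ)) : ℝ :=
  sInf { c | ∃ cpl : Measure ((Fin d → ℝ) × (Fin d → ℝ)), IsProbabilityMeasure cpl ∧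
    IsCoupling cpl μ ν ∧ c = (∫ z, tdist z.1 z.2 ^ p ∂cpl) ^ (1/p) }

/-- The measure `h dx` on the torus associated to a density `h`. -/
def densMeasure {d : ℕ} (h : (Fin d → ℝ) → ℝ) : Measure (Fin d → ℝ) :=
  (torusMeasure d).withDensity fun x => ENNReal.ofReal (h x)

/-- The `L^p(𝕋^d)` norm (as a real number). -/
def LpNorm {d : ℕ} (p : ℝ≥0∞) (u : (Fin d → ℝ) → ℝ) : ℝ :=
  (eLpNorm u p (torusMeasure d)).toReal

/-- `U` is a weak solution of `ε² Δ U = g` on the torus: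
`ε² ∫ ∇U·∇φ dx = −∫ g φ dx` for every smooth (periodic) test function `φ`. -/
def IsWeakPoisson {d : ℕ} (ε : ℝ) (U g : (Fin d → ℝ) → ℝ) : Prop :=
  ∀ φ : (Fin d → ℝ) → ℝ, ContDiff ℝ (⊤ : ℕ∞) φ → ZPeriodic φ →
    ε ^ 2 * ∫ x, dotP (grad U x) (grad φ x) ∂(torusMeasure d) =
      - ∫ x, g x * φ x ∂(torusMeasure d)

end
noncomputable section

/-- The rescaled mollifier `χ_r(x) = r^{-d} χ(x/r)` on `ℝ^d`. -/
def scaledMollifier {d : ℕ} (χ : (Fin d → ℝ) → ℝ) (r : ℝ) (x : Fin d → ℝ) : ℝ :=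
  (r ^ d)⁻¹ * χ (fun i => x i / r)

/-- The `ℤ^d`-periodisation of a function on `ℝ^d`, giving a function on the torus. -/
def periodised {d : ℕ} (g : (Fin d → ℝ) → ℝ) (x : Fin d → ℝ) : ℝ :=
  ∑' k : Fin d → ℤ, g (x + latVec k)

/-- The measure `χ_r ∗ μ` on the torus: the measure with density
`x ↦ ∫ χ_r(x − y) dμ(y)` with respect to the Haar measure (with `χ_r` periodised). -/
def mollifyMeasure {d : ℕ} (χ : (Fin d → ℝ) → ℝ) (r : ℝ) (μ : Measure (Fin d → ℝ)) :
    Measure (Fin d → ℝ) :=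
  (torusMeasure d).withDensity fun x =>
    ENNReal.ofReal (∫ y, periodised (scaledMollifier χ r) (x - y) ∂μ)

/-- A Borel probability measure on the torus `𝕋^d`, realised as a probability measure on
`ℝ^d` carried by the fundamental domain. -/
def IsTorusProb {d : ℕ} (μ : Measure (Fin d → ℝ)) : Prop :=
  IsProbabilityMeasure μ ∧ μ (Tcube d)ᶜ = 0

/-- The set `A_d` of allowed Hölder exponents: `(0,1)` if `d = 2`, `(0,1/5]` if `d = 3`. -/
def Aset (d : ℕ) : Set ℝ := if d = 2 then Set.Ioo 0 1 else Set.Ioc 0 (1/5)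

end

open MeasureTheory Real Set
open scoped ENNReal

section PartOne
open MvPolynomial

/-- partial derivative -/
noncomputable def pd {d : ℕ} (i : Fin d) (f : (Fin d → ℝ) → ℝ) : (Fin d → ℝ) → ℝ :=
  fun x => fderiv ℝ f x (Pi.single i 1)

/-- Gaussian times a polynomial -/
noncomputable def gW {d : ℕ} (p : MvPolynomial (Fin d) ℝ) (z : Fin d → ℝ) : ℝ :=
  eval z p * Real.exp (-(∑ i, (z i) ^ 2) / 2)

/-- Stein operator on polynomials -/
noncomputable def sp {d : ℕ} (k : Fin d) (p : MvPolynomial (Fin d) ℝ) : MvPolynomial (Fin d) ℝ :=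
  X k * p - pderiv k p

/-- decay weight -/
noncomputable def wt (d : ℕ) (z : Fin d → ℝ) : ℝ := (1 + ‖z‖) ^ (-((d:ℝ) + 2))

lemma eval_line {d : ℕ} (p : MvPolynomial (Fin d) ℝ) (k : Fin d) (z : Fin d → ℝ) :
    HasLineDerivAt ℝ (fun y => eval y p) (eval z (pderiv k p)) z (Pi.single k 1) := by
  induction p using MvPolynomial.induction_on with
  | C a => simp [HasLineDerivAt, hasDerivAt_const]
  | add p q hp hq =>
    simp only [HasLineDerivAt, map_add] at *
    exact hp.add hq
  | mul_X p j hp =>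
    simp only [HasLineDerivAt, map_mul, Derivation.leibniz, map_add, smul_eq_mul, eval_X] at *
    have h1 : HasDerivAt (fun t : ℝ => (z + t • (Pi.single k 1 : Fin d → ℝ)) j)
        (eval z (pderiv k (X j : MvPolynomial (Fin d) ℝ))) 0 := by
      have h2 : HasDerivAt (fun t : ℝ => z j + t * (Pi.single k 1 : Fin d → ℝ) j)
        (1 * (Pi.single k 1 : Fin d → ℝ) j) 0 :=
        ((hasDerivAt_id (0:ℝ)).mul_const _).const_add _
      convert! h2 using 1
      rw [pderiv_X]
      by_cases h : j = k
      · subst h; simp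
      · simp [Pi.single_apply, h]
    convert! hp.mul h1 using 1
    simp
    ring

lemma gauss_line {d : ℕ} (k : Fin d) (z : Fin d → ℝ) :
    HasLineDerivAt ℝ (fun y : Fin d → ℝ => Real.exp (-(∑ i, (y i) ^ 2) / 2))
      (- z k * Real.exp (-(∑ i, (z i) ^ 2) / 2)) z (Pi.single k 1) := by
  have h0 : ∀ i, HasLineDerivAt ℝ (fun y : Fin d → ℝ => (y i)^2)
      (2 * z i * (Pi.single k 1 : Fin d → ℝ) i) z (Pi.single k 1) := by
    intro i
    have h2 : HasDerivAt (fun t : ℝ => z i + t * (Pi.single k 1 : Fin d → ℝ) i)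
        (1 * (Pi.single k 1 : Fin d → ℝ) i) 0 :=
        ((hasDerivAt_id (0:ℝ)).mul_const _).const_add _
    have := h2.pow 2
    simp only [HasLineDerivAt]
    convert! this using 1
    simp
  have h1 : HasDerivAt (fun t : ℝ => ∑ i, ((z + t • (Pi.single k 1 : Fin d → ℝ)) i)^2)
      (∑ i, 2 * z i * (Pi.single k 1 : Fin d → ℝ) i) 0 := by
    apply HasDerivAt.fun_sum
    intro i _
    exact h0 i
  have h3 := (h1.neg.div_const 2).exp
  simp only [HasLineDerivAt]
  convert! h3 using 1
  simp [Pi.single_apply]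
  ring

lemma gW_line {d : ℕ} (p : MvPolynomial (Fin d) ℝ) (k : Fin d) (z : Fin d → ℝ) :
    HasLineDerivAt ℝ (gW p) (- gW (sp k p) z) z (Pi.single k 1) := by
  have h1 := eval_line p k z
  have h2 := gauss_line k z
  simp only [HasLineDerivAt] at *
  convert! h1.mul h2 using 1
  simp [gW, sp]
  ring

lemma continuous_gW {d : ℕ} (p : MvPolynomial (Fin d) ℝ) : Continuous (gW p) := by
  unfold gW
  have : Continuous fun z : Fin d → ℝ => eval z p := MvPolynomial.continuous_eval p
  fun_prop

lemma wt_pos {d : ℕ} (z : Fin d → ℝ) : 0 < wt d z := by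
  unfold wt; positivity

lemma continuous_wt {d : ℕ} : Continuous (wt d) := by
  unfold wt
  apply Continuous.rpow_const (by fun_prop)
  intro x; left; positivity

lemma integrable_wt {d : ℕ} : Integrable (wt d) := by
  unfold wt
  apply integrable_one_add_norm
  simp

lemma integrable_wt_norm {d : ℕ} : Integrable (fun z => wt d z * (1 + ‖z‖)) := by
  have : (fun z : Fin d → ℝ => wt d z * (1 + ‖z‖)) = fun z => (1 + ‖z‖) ^ (-((d:ℝ) + 1)) := by
    ext z
    unfold wt
    rw [← Real.rpow_add_one (by positivity)]
    congr 1; ring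
  rw [this]
  apply integrable_one_add_norm
  simp

lemma eval_growth {d : ℕ} (p : MvPolynomial (Fin d) ℝ) :
    ∃ C : ℝ, 0 ≤ C ∧ ∃ m : ℕ, ∀ z : Fin d → ℝ, |eval z p| ≤ C * (1 + ‖z‖) ^ m := by
  induction p using MvPolynomial.induction_on with
  | C a => exact ⟨|a|, abs_nonneg _, 0, fun z => by simp⟩
  | add p q hp hq =>
    obtain ⟨C, hC, m, h⟩ := hp
    obtain ⟨C', hC', m', h'⟩ := hq
    refine ⟨C + C', by positivity, m + m', fun z => ?_⟩
    have h1 : (1 + ‖z‖) ^ m ≤ (1 + ‖z‖) ^ (m + m') :=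
      pow_le_pow_right₀ (by linarith [norm_nonneg z]) (by omega)
    have h2 : (1 + ‖z‖) ^ m' ≤ (1 + ‖z‖) ^ (m + m') :=
      pow_le_pow_right₀ (by linarith [norm_nonneg z]) (by omega)
    rw [map_add]
    calc |eval z p + eval z q| ≤ |eval z p| + |eval z q| := abs_add_le _ _
      _ ≤ C * (1 + ‖z‖) ^ m + C' * (1 + ‖z‖) ^ m' := add_le_add (h z) (h' z)
      _ ≤ C * (1 + ‖z‖) ^ (m + m') + C' * (1 + ‖z‖) ^ (m + m') := by gcongr
      _ = _ := by ring
  | mul_X p j hp =>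
    obtain ⟨C, hC, m, h⟩ := hp
    refine ⟨C, hC, m + 1, fun z => ?_⟩
    rw [map_mul, eval_X, abs_mul, pow_succ, ← mul_assoc]
    have : |z j| ≤ 1 + ‖z‖ := by
      have := norm_le_pi_norm z j
      rw [Real.norm_eq_abs] at this
      linarith
    exact mul_le_mul (h z) this (abs_nonneg _) (by positivity)

lemma norm_sq_le_sum {d : ℕ} (z : Fin d → ℝ) : ‖z‖ ^ 2 ≤ ∑ i, (z i) ^ 2 := by
  have h : ‖z‖ ≤ √(∑ i, (z i) ^ 2) := by
    rw [pi_norm_le_iff_of_nonneg (by positivity)]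
    intro i
    rw [Real.norm_eq_abs]
    apply Real.abs_le_sqrt
    exact Finset.single_le_sum (f := fun i => (z i)^2) (fun i _ => sq_nonneg _) (Finset.mem_univ i)
  calc ‖z‖ ^ 2 ≤ (√(∑ i, (z i) ^ 2)) ^ 2 := by gcongr
    _ = _ := Real.sq_sqrt (by positivity)

lemma gW_dec {d : ℕ} (p : MvPolynomial (Fin d) ℝ) :
    ∃ C : ℝ, 0 < C ∧ ∀ z, |gW p z| ≤ C * wt d z := by
  obtain ⟨C, hC, m, h⟩ := eval_growth p
  set M := m + (d + 2)
  refine ⟨(C + 1) * (M.factorial * Real.exp (3/2)), by positivity, fun z => ?_⟩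
  set r := ‖z‖ with hr
  have hr0 : 0 ≤ r := norm_nonneg z
  have h1 : (1 + r) ^ M ≤ M.factorial * Real.exp (1 + r) := by
    have := Real.pow_div_factorial_le_exp (1 + r) (by positivity) M
    rw [div_le_iff₀ (by positivity)] at this
    linarith
  have h2 : Real.exp (-(∑ i, (z i) ^ 2) / 2) ≤ Real.exp (-(r^2)/2) := by
    apply Real.exp_le_exp.mpr
    have := norm_sq_le_sum z
    linarith
  have h3 : (1 + r) ^ M * Real.exp (-(r^2)/2) ≤ M.factorial * Real.exp (3/2) := by
    calc (1 + r) ^ M * Real.exp (-(r^2)/2) ≤ M.factorial * Real.exp (1 + r) * Real.exp (-(r^2)/2) := by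
          gcongr
      _ = M.factorial * Real.exp (1 + r + -(r^2)/2) := by rw [mul_assoc, ← Real.exp_add]
      _ ≤ _ := by
        gcongr
        nlinarith [sq_nonneg (r - 1)]
  have h4 : wt d z * (1 + r) ^ (d + 2) = 1 := by
    unfold wt
    rw [← Real.rpow_natCast, ← Real.rpow_add (by positivity)]
    push_cast
    rw [neg_add_cancel, Real.rpow_zero]
  have h5 : 0 ≤ wt d z := (wt_pos z).le
  unfold gW
  rw [abs_mul, Real.abs_exp]
  calc |eval z p| * Real.exp (-(∑ i, (z i) ^ 2) / 2)
      ≤ (C + 1) * (1 + r) ^ m * Real.exp (-(r^2)/2) := by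
        have := h z
        have h6 : C * (1 + r)^m ≤ (C + 1) * (1 + r)^m := by gcongr; linarith
        exact mul_le_mul (this.trans h6) h2 (Real.exp_pos _).le (by positivity)
    _ = (C + 1) * ((1 + r) ^ M * Real.exp (-(r^2)/2)) * wt d z := by
        have : (1 + r) ^ M = (1 + r)^m * (1 + r)^(d+2) := by rw [← pow_add]
        rw [this]
        linear_combination (-(C+1) * (1 + r) ^ m * Real.exp (-(r^2)/2)) * h4
    _ ≤ _ := by gcongr

lemma integrable_gW {d : ℕ} (p : MvPolynomial (Fin d) ℝ) : Integrable (gW p) := by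
  obtain ⟨C, hC, h⟩ := gW_dec p
  exact (integrable_wt.const_mul C).mono' (continuous_gW p).aestronglyMeasurable
    (Filter.Eventually.of_forall h)

/-- the basic weighted average -/
noncomputable def Kc {d : ℕ} (p : MvPolynomial (Fin d) ℝ) (s : ℝ) (f : (Fin d → ℝ) → ℝ)
    (x : Fin d → ℝ) : ℝ := ∫ z, gW p z * f (x + s • z)

lemma integrable_gW_mul {d : ℕ} (p : MvPolynomial (Fin d) ℝ) {g : (Fin d → ℝ) → ℝ}
    (hg : Measurable g) {M : ℝ} (hM : ∀ x, |g x| ≤ M) : Integrable (fun z => gW p z * g z) := by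
  refine (integrable_gW p).mul_bdd (c := M) hg.aestronglyMeasurable (Filter.Eventually.of_forall hM)

lemma pd_line {d : ℕ} {f : (Fin d → ℝ) → ℝ} (hf : Differentiable ℝ f) (k : Fin d)
    (x : Fin d → ℝ) (s : ℝ) (z : Fin d → ℝ) :
    HasLineDerivAt ℝ (fun z => f (x + s • z)) (s * pd k f (x + s • z)) z (Pi.single k 1) := by
  have h1 : HasFDerivAt (fun z : Fin d → ℝ => x + s • z)
      (s • ContinuousLinearMap.id ℝ (Fin d → ℝ)) z :=
    ((hasFDerivAt_id z).const_smul s).const_add x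
  have h2 := (hf (x + s • z)).hasFDerivAt.comp z h1
  have := h2.hasLineDerivAt (Pi.single k 1)
  convert! this using 1
  simp [pd]

lemma stein {d : ℕ} (p : MvPolynomial (Fin d) ℝ) {f : (Fin d → ℝ) → ℝ} (hf : ContDiff ℝ 1 f)
    (k : Fin d) {M M' : ℝ} (hM : ∀ x, |f x| ≤ M) (hM' : ∀ x, |pd k f x| ≤ M') (s : ℝ)
    (x : Fin d → ℝ) : s * Kc p s (pd k f) x = Kc (sp k p) s f x := by
  have hc : Continuous (pd k f) := (hf.continuous_fderiv one_ne_zero).clm_apply continuous_const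
  have hcf := hf.continuous
  have m1 : Measurable fun z : Fin d → ℝ => f (x + s • z) :=
    (by fun_prop : Continuous fun z : Fin d → ℝ => f (x + s • z)).measurable
  have m2 : Measurable fun z : Fin d → ℝ => pd k f (x + s • z) :=
    (by fun_prop : Continuous fun z : Fin d → ℝ => pd k f (x + s • z)).measurable
  have i1 := integrable_gW_mul p m1 (fun z => hM (x + s • z))
  have i2 := integrable_gW_mul p m2 (fun z => hM' (x + s • z))
  have i3 := integrable_gW_mul (sp k p) m1 (fun z => hM (x + s • z))
  have key := integral_bilinear_hasLineDerivAt_right_eq_neg_left_of_integrable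
    (μ := (volume : Measure (Fin d → ℝ)))
    (f := gW p) (f' := fun z => - gW (sp k p) z) (g := fun z => f (x + s • z))
    (g' := fun z => s * pd k f (x + s • z)) (v := Pi.single k 1)
    (B := ContinuousLinearMap.mul ℝ ℝ)
    (by simpa using i3.neg) (by
      have := i2.const_mul s
      refine this.congr (Filter.Eventually.of_forall fun z => ?_)
      simp; ring) (by simpa using i1) (fun z _ => gW_line p k z)
      (fun z _ => pd_line (hf.differentiable one_ne_zero) k x s z)
  simp only [ContinuousLinearMap.mul_apply'] at key
  unfold Kc
  rw [← integral_const_mul]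
  calc _ = ∫ z, gW p z * (s * pd k f (x + s • z)) := by congr 1; ext z; ring
    _ = _ := by rw [key, ← integral_neg]; congr 1; ext z; ring

end PartOne

open MeasureTheory Real Set
open scoped ENNReal

section PartTwo
open scoped Pointwise

lemma tcube_eq (d : ℕ) : Tcube d = ZSpan.fundamentalDomain (Pi.basisFun ℝ (Fin d)) := by
  ext x
  simp [Tcube, ZSpan.mem_fundamentalDomain]

lemma measurableSet_tcube (d : ℕ) : MeasurableSet (Tcube d) :=
  MeasurableSet.univ_pi fun _ => measurableSet_Ico

lemma volume_tcube (d : ℕ) : volume (Tcube d) = 1 := by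
  simp [Tcube, volume_pi_pi]

instance torus_prob (d : ℕ) : IsProbabilityMeasure (torusMeasure d) :=
  ⟨by simp [torusMeasure, volume_tcube]⟩

lemma tcube_fund (d : ℕ) : IsAddFundamentalDomain
    (Submodule.span ℤ (Set.range (Pi.basisFun ℝ (Fin d)))).toAddSubgroup (Tcube d) volume := by
  rw [tcube_eq]; exact ZSpan.isAddFundamentalDomain' _ _

lemma lattice_vec {d : ℕ} (g : (Submodule.span ℤ (Set.range (Pi.basisFun ℝ (Fin d)))).toAddSubgroup) :
    ∃ k : Fin d → ℤ, (g : Fin d → ℝ) = latVec k := by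
  have := (Module.Basis.mem_span_iff_repr_mem ℤ (Pi.basisFun ℝ (Fin d)) (g : Fin d → ℝ)).mp g.2
  choose k hk using this
  refine ⟨k, ?_⟩
  ext i
  have := hk i
  simp at this
  simp [latVec, this]

lemma per_vadd {d : ℕ} {β : Type*} {f : (Fin d → ℝ) → β} (hf : ZPeriodic f)
    (g : (Submodule.span ℤ (Set.range (Pi.basisFun ℝ (Fin d)))).toAddSubgroup) (x : Fin d → ℝ) :
    f (g +ᵥ x) = f x := by
  obtain ⟨k, hk⟩ := lattice_vec g
  have : g +ᵥ x = x + latVec k := by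
    rw [← hk, add_comm]; rfl
  rw [this, hf]

instance lat_countable (d : ℕ) : Countable
    (Submodule.span ℤ (Set.range (Pi.basisFun ℝ (Fin d)))).toAddSubgroup :=
  inferInstanceAs (Countable (Submodule.span ℤ (Set.range (Pi.basisFun ℝ (Fin d)))))

lemma tcube_fund_shift {d : ℕ} (y : Fin d → ℝ) : IsAddFundamentalDomain
    (Submodule.span ℤ (Set.range (Pi.basisFun ℝ (Fin d)))).toAddSubgroup (y +ᵥ Tcube d) volume :=
  (tcube_fund d).vadd_of_comm y

lemma tor_shift {d : ℕ} {f : (Fin d → ℝ) → ℝ} (hf : ZPeriodic f) (y : Fin d → ℝ) :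
    ∫ z, f (y + z) ∂(torusMeasure d) = ∫ z, f z ∂(torusMeasure d) := by
  unfold torusMeasure
  rw [(tcube_fund d).setIntegral_eq (tcube_fund_shift y) (per_vadd hf)]
  have h := (measurePreserving_add_left volume y).setIntegral_image_emb
    (measurableEmbedding_addLeft y) f (Tcube d)
  rw [← h]
  rfl

lemma tor_lshift {d : ℕ} {f : (Fin d → ℝ) → ℝ≥0∞} (hf : ZPeriodic f) (y : Fin d → ℝ) :
    ∫⁻ z, f (y + z) ∂(torusMeasure d) = ∫⁻ z, f z ∂(torusMeasure d) := by
  unfold torusMeasure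
  rw [(tcube_fund d).setLIntegral_eq (tcube_fund_shift y) f (per_vadd hf)]
  have h := (measurePreserving_add_left volume y).setLIntegral_comp_emb
    (measurableEmbedding_addLeft y) f (Tcube d)
  rw [h]
  rfl

/-- every point is equivalent to a point of the cube -/
lemma per_repr {d : ℕ} (x : Fin d → ℝ) :
    ∃ k : Fin d → ℤ, x + latVec k ∈ Set.Icc (0 : Fin d → ℝ) 1 := by
  refine ⟨fun i => - ⌊x i⌋, ?_, ?_⟩
  · intro i
    simp only [latVec, Pi.add_apply, Pi.zero_apply]
    push_cast
    linarith [Int.floor_le (x i)]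
  · intro i
    simp only [latVec, Pi.add_apply, Pi.one_apply]
    push_cast
    linarith [Int.lt_floor_add_one (x i)]

lemma per_max {d : ℕ} {f : (Fin d → ℝ) → ℝ} (hf : ZPeriodic f) (hc : Continuous f) :
    ∃ x, ∀ y, f y ≤ f x := by
  obtain ⟨x, _, hx⟩ := (isCompact_Icc (a := (0 : Fin d → ℝ)) (b := 1)).exists_isMaxOn
    ⟨0, by simp⟩ hc.continuousOn
  refine ⟨x, fun y => ?_⟩
  obtain ⟨k, hk⟩ := per_repr y
  rw [← hf y k]
  exact hx hk

lemma per_bdd {d : ℕ} {f : (Fin d → ℝ) → ℝ} (hf : ZPeriodic f) (hc : Continuous f) :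
    ∃ M, 0 ≤ M ∧ ∀ y, |f y| ≤ M := by
  obtain ⟨x, hx⟩ := per_max (f := fun y => |f y|) (fun y k => by simp [hf y k]) hc.abs
  exact ⟨|f x|, abs_nonneg _, hx⟩

/-- smooth periodic -/
def SP {d : ℕ} (f : (Fin d → ℝ) → ℝ) : Prop := ContDiff ℝ (⊤ : ℕ∞) f ∧ ZPeriodic f

lemma per_pd {d : ℕ} {f : (Fin d → ℝ) → ℝ} (hf : ZPeriodic f) (k : Fin d) :
    ZPeriodic (pd k f) := by
  intro x m
  unfold pd
  have h : (fun y => f (y + latVec m)) = f := by ext y; exact hf y m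
  have := fderiv_comp_add_right (𝕜 := ℝ) (f := f) (x := x) (latVec m)
  rw [h] at this
  rw [this]

lemma SP.pd {d : ℕ} {f : (Fin d → ℝ) → ℝ} (hf : SP f) (k : Fin d) : SP (pd k f) := by
  refine ⟨?_, per_pd hf.2 k⟩
  have h : ContDiff ℝ (⊤ : ℕ∞) (fderiv ℝ f) := hf.1.fderiv_right (by simp)
  exact h.clm_apply contDiff_const

lemma SP.c1 {d : ℕ} {f : (Fin d → ℝ) → ℝ} (hf : SP f) : ContDiff ℝ 1 f :=
  hf.1.of_le (by exact_mod_cast le_top)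

lemma SP.c2 {d : ℕ} {f : (Fin d → ℝ) → ℝ} (hf : SP f) : ContDiff ℝ 2 f :=
  contDiff_infty.mp hf.1 2

lemma SP.cont {d : ℕ} {f : (Fin d → ℝ) → ℝ} (hf : SP f) : Continuous f := hf.1.continuous

lemma SP.bdd {d : ℕ} {f : (Fin d → ℝ) → ℝ} (hf : SP f) : ∃ M, 0 ≤ M ∧ ∀ y, |f y| ≤ M :=
  per_bdd hf.2 hf.cont

lemma SP.add {d : ℕ} {f g : (Fin d → ℝ) → ℝ} (hf : SP f) (hg : SP g) : SP (fun x => f x + g x) :=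
  ⟨hf.1.add hg.1, fun x k => by simp [hf.2 x k, hg.2 x k]⟩

lemma SP.sum {d : ℕ} {f : Fin d → (Fin d → ℝ) → ℝ} (hf : ∀ i, SP (f i)) :
    SP (fun x => ∑ i, f i x) :=
  ⟨ContDiff.sum fun i _ => (hf i).1, fun x k => by simp [fun i => (hf i).2 x k]⟩

lemma SP.lap {d : ℕ} {f : (Fin d → ℝ) → ℝ} (hf : SP f) : SP (lap f) :=
  SP.sum fun i => (hf.pd i).pd i

lemma pd_comm {d : ℕ} {f : (Fin d → ℝ) → ℝ} (hf : ContDiff ℝ 2 f) (i j : Fin d) :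
    pd i (pd j f) = pd j (pd i f) := by
  ext x
  have hd : DifferentiableAt ℝ (fderiv ℝ f) x :=
    ((hf.fderiv_right (m := 1) (by norm_num)).differentiable one_ne_zero) x
  have h : ∀ i j : Fin d, pd i (pd j f) x
      = fderiv ℝ (fderiv ℝ f) x (Pi.single i 1) (Pi.single j 1) := by
    intro i j
    show fderiv ℝ (fun y => fderiv ℝ f y (Pi.single j 1)) x (Pi.single i 1) = _
    rw [fderiv_clm_apply hd (differentiableAt_const _)]
    simp
  rw [h, h]
  have := (hf.contDiffAt (x := x)).isSymmSndFDerivAt (by simp)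
  exact this _ _

lemma pd_sum {d : ℕ} {f : Fin d → (Fin d → ℝ) → ℝ} (hf : ∀ i, Differentiable ℝ (f i)) (k : Fin d) :
    pd k (fun x => ∑ i, f i x) = fun x => ∑ i, pd k (f i) x := by
  ext x
  unfold pd
  rw [fderiv_fun_sum fun i _ => (hf i) x]
  simp

lemma lap_pd {d : ℕ} {f : (Fin d → ℝ) → ℝ} (hf : SP f) (k : Fin d) :
    lap (pd k f) = pd k (lap f) := by
  have h : lap f = fun x => ∑ i, pd i (pd i f) x := rfl
  rw [h, pd_sum (fun i => ((hf.pd i).pd i).c1.differentiable one_ne_zero)]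
  ext x
  show ∑ i, pd i (pd i (pd k f)) x = _
  apply Finset.sum_congr rfl
  intro i _
  rw [pd_comm hf.c2 i k, pd_comm (hf.pd i).c2 i k]

lemma fderiv_le_of_pd {d : ℕ} {f : (Fin d → ℝ) → ℝ} {x : Fin d → ℝ} {M : ℝ} (hM : 0 ≤ M)
    (h : ∀ k, |pd k f x| ≤ M) : ‖fderiv ℝ f x‖ ≤ d * M := by
  apply ContinuousLinearMap.opNorm_le_bound _ (by positivity)
  intro v
  have hv : v = ∑ i, v i • (Pi.single i 1 : Fin d → ℝ) := by
    ext j; simp [Finset.sum_apply, Pi.single_apply]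
  have : fderiv ℝ f x v = ∑ i, v i * pd i f x := by
    conv_lhs => rw [hv]
    simp [pd]
  rw [this]
  calc ‖∑ i, v i * pd i f x‖ ≤ ∑ i : Fin d, ‖v‖ * M := by
        apply norm_sum_le_of_le
        intro i _
        rw [norm_mul]
        exact mul_le_mul (norm_le_pi_norm v i) (h i) (norm_nonneg _) (norm_nonneg _)
    _ = _ := by simp; ring

lemma lip_of_pd {d : ℕ} {f : (Fin d → ℝ) → ℝ} (hf : Differentiable ℝ f) {M : ℝ} (hM : 0 ≤ M)
    (h : ∀ k x, |pd k f x| ≤ M) (x y : Fin d → ℝ) : |f x - f y| ≤ d * M * ‖x - y‖ := by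
  have := Convex.norm_image_sub_le_of_norm_fderiv_le (𝕜 := ℝ) (f := f) (s := Set.univ) (C := d * M)
    (fun x _ => hf x) (fun x _ => fderiv_le_of_pd hM (fun k => h k x)) convex_univ
    (Set.mem_univ y) (Set.mem_univ x)
  simpa using this

end PartTwo

open MeasureTheory Real Set
open scoped ENNReal

section PartThree
open MvPolynomial

lemma Kc_sup {d : ℕ} (p : MvPolynomial (Fin d) ℝ) :
    ∃ C : ℝ, 0 < C ∧ ∀ (f : (Fin d → ℝ) → ℝ) (M : ℝ), (∀ x, |f x| ≤ M) →
      ∀ s x, |Kc p s f x| ≤ C * M := by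
  obtain ⟨C, hC, h⟩ := gW_dec p
  have hw : 0 ≤ ∫ z, wt d z := integral_nonneg fun z => (wt_pos z).le
  refine ⟨C * (∫ z, wt d z) + 1, by positivity, fun f M hM s x => ?_⟩
  have hM0 : 0 ≤ M := (abs_nonneg _).trans (hM 0)
  have := norm_integral_le_of_norm_le (f := fun z => gW p z * f (x + s • z))
    (g := fun z => C * M * wt d z) (μ := volume) (integrable_wt.const_mul _)
    (Filter.Eventually.of_forall fun z => by
      rw [norm_mul]
      calc _ ≤ (C * wt d z) * M := mul_le_mul (h z) (hM _) (abs_nonneg _)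
            (mul_nonneg hC.le (wt_pos z).le)
        _ = _ := by ring)
  rw [integral_const_mul] at this
  unfold Kc
  rw [← Real.norm_eq_abs]
  nlinarith

lemma int_gW_sp {d : ℕ} (p : MvPolynomial (Fin d) ℝ) (k : Fin d) : ∫ z, gW (sp k p) z = 0 := by
  have := stein p (f := fun _ => (1:ℝ)) contDiff_const k (M := 1) (M' := 0)
    (by simp) (by simp [pd]) 1 0
  simp [Kc, pd] at this
  exact this.symm

lemma Kc_hol {d : ℕ} (p : MvPolynomial (Fin d) ℝ) (k : Fin d) {α : ℝ} (hα : α ∈ Ioo (0:ℝ) 1) :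
    ∃ C : ℝ, 0 < C ∧ ∀ (f : (Fin d → ℝ) → ℝ) (M H : ℝ), Continuous f → (∀ x, |f x| ≤ M) → 
      0 ≤ H → (∀ x y, |f x - f y| ≤ H * ‖x - y‖ ^ α) →
      ∀ s, 0 < s → ∀ x, |Kc (sp k p) s f x| ≤ C * (H * s ^ α) := by
  obtain ⟨C, hC, h⟩ := gW_dec (sp k p)
  have hw : 0 ≤ ∫ z, wt d z * (1 + ‖z‖) :=
    integral_nonneg fun z => mul_nonneg (wt_pos z).le (by positivity)
  refine ⟨C * (∫ z, wt d z * (1 + ‖z‖)) + 1, by positivity, fun f M H hf hM hH hH' s hs x => ?_⟩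
  have e1 : Kc (sp k p) s f x = ∫ z, gW (sp k p) z * (f (x + s • z) - f x) := by
    have h1 : Integrable fun z => gW (sp k p) z * f (x + s • z) :=
      integrable_gW_mul _ (by fun_prop : Continuous fun z : Fin d → ℝ => f (x + s • z)).measurable
        (fun z => hM (x + s • z))
    have h2 : Integrable fun z => gW (sp k p) z * f x := (integrable_gW _).mul_const _
    simp only [mul_sub]
    rw [integral_sub h1 h2, integral_mul_const, int_gW_sp]
    simp [Kc]
  have h3 := norm_integral_le_of_norm_le (f := fun z => gW (sp k p) z * (f (x + s • z) - f x))
    (g := fun z => C * (H * s ^ α) * (wt d z * (1 + ‖z‖))) (μ := volume)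
    (integrable_wt_norm.const_mul _)
    (Filter.Eventually.of_forall fun z => by
      rw [norm_mul]
      have hz : ‖z‖ ^ α ≤ 1 + ‖z‖ := by
        calc ‖z‖ ^ α ≤ (1 + ‖z‖) ^ α := by
              apply Real.rpow_le_rpow (norm_nonneg _) (by linarith) hα.1.le
          _ ≤ (1 + ‖z‖) ^ (1:ℝ) :=
              Real.rpow_le_rpow_of_exponent_le (by linarith [norm_nonneg z]) hα.2.le
          _ = _ := Real.rpow_one _
      have h4 : ‖f (x + s • z) - f x‖ ≤ H * s ^ α * (1 + ‖z‖) := by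
        calc _ ≤ H * ‖x + s • z - x‖ ^ α := hH' _ _
          _ = H * s ^ α * ‖z‖ ^ α := by
            rw [add_sub_cancel_left, norm_smul, Real.norm_of_nonneg hs.le,
              Real.mul_rpow hs.le (norm_nonneg _)]; ring
          _ ≤ _ := by gcongr
      calc _ ≤ (C * wt d z) * (H * s ^ α * (1 + ‖z‖)) := mul_le_mul (h z) h4 (norm_nonneg _)
            (mul_nonneg hC.le (wt_pos z).le)
        _ = _ := by ring)
  rw [integral_const_mul] at h3
  rw [e1, ← Real.norm_eq_abs]
  have : 0 ≤ H * s ^ α := by positivity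
  nlinarith

lemma wt_anti {d : ℕ} {y z : Fin d → ℝ} (h : ‖y‖ ≤ ‖z‖) : wt d z ≤ wt d y := by
  unfold wt
  apply Real.rpow_le_rpow_of_nonpos (by positivity) (by linarith)
  have : (0:ℝ) ≤ d := by positivity
  linarith

lemma wt_shift {d : ℕ} {y θ : Fin d → ℝ} (h : ‖θ‖ ≤ 1) :
    wt d y ≤ 2 ^ ((d:ℝ) + 2) * wt d (y - θ) := by
  unfold wt
  rw [Real.rpow_neg (by positivity), Real.rpow_neg (by positivity), ← div_eq_mul_inv,
    ← Real.div_rpow (by positivity) (by positivity), ← Real.inv_rpow (by positivity)]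
  apply Real.rpow_le_rpow (by positivity) _ (by positivity)
  rw [inv_eq_one_div, div_le_div_iff₀ (by positivity) (by positivity)]
  have := norm_sub_le y θ
  linarith [norm_nonneg y]

lemma norm_le_one_of_tcube {d : ℕ} {θ : Fin d → ℝ} (h : θ ∈ Tcube d) : ‖θ‖ ≤ 1 := by
  rw [pi_norm_le_iff_of_nonneg zero_le_one]
  intro i
  have := h i (Set.mem_univ i)
  rw [Real.norm_eq_abs, abs_le]
  constructor <;> linarith [this.1, this.2]

lemma tonelli0 {d : ℕ} {G : (Fin d → ℝ) → ℝ≥0∞} (hG : Measurable G) (hp : ZPeriodic G)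
    (x : Fin d → ℝ) :
    ∫⁻ y, ENNReal.ofReal (wt d y) * G (x + y) ≤
      ENNReal.ofReal (2 ^ ((d:ℝ) + 2) * ∫ z, wt d z) * ∫⁻ z, G z ∂(torusMeasure d) := by
  have mw : Measurable fun y : Fin d → ℝ => ENNReal.ofReal (wt d y) :=
    continuous_wt.measurable.ennreal_ofReal
  set c : ℝ := 2 ^ ((d:ℝ) + 2) with hc
  have hc0 : 0 ≤ c := by positivity
  calc ∫⁻ y, ENNReal.ofReal (wt d y) * G (x + y)
      = ∫⁻ θ, (∫⁻ y, ENNReal.ofReal (wt d y) * G (x + y)) ∂(torusMeasure d) := by simp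
    _ ≤ ∫⁻ θ, (∫⁻ y, ENNReal.ofReal (c * wt d (y - θ)) * G (x + y)) ∂(torusMeasure d) := by
        unfold torusMeasure
        apply setLIntegral_mono' (measurableSet_tcube d)
        intro θ hθ
        apply lintegral_mono
        intro y
        dsimp only
        gcongr
        exact wt_shift (norm_le_one_of_tcube hθ)
    _ = ∫⁻ θ, (∫⁻ y, ENNReal.ofReal (c * wt d y) * G (x + y + θ)) ∂(torusMeasure d) := by
        congr 1; ext θ
        rw [← lintegral_sub_right_eq_self (fun y => ENNReal.ofReal (c * wt d y) * G (x + y + θ)) θ]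
        congr 1; ext y
        congr 2; abel
    _ = ∫⁻ y, (∫⁻ θ, ENNReal.ofReal (c * wt d y) * G (x + y + θ) ∂(torusMeasure d)) := by
        rw [lintegral_lintegral_swap]
        apply Measurable.aemeasurable
        have : Measurable fun q : (Fin d → ℝ) × (Fin d → ℝ) => ENNReal.ofReal (c * wt d q.2) :=
          ((continuous_wt.measurable.comp measurable_snd).const_mul c).ennreal_ofReal
        apply this.mul
        apply hG.comp
        fun_prop
    _ = ∫⁻ y, ENNReal.ofReal (c * wt d y) * ∫⁻ z, G z ∂(torusMeasure d) := by
        congr 1; ext y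
        have m3 : Measurable fun θ : Fin d → ℝ => G (x + y + θ) := hG.comp (by fun_prop)
        rw [lintegral_const_mul _ m3, tor_lshift hp]
    _ = _ := by
        rw [lintegral_mul_const _ ((continuous_wt.measurable.const_mul c).ennreal_ofReal),
          ← ofReal_integral_eq_lintegral_ofReal (integrable_wt.const_mul c)
            (Filter.Eventually.of_forall fun z => mul_nonneg hc0 (wt_pos z).le), integral_const_mul]

lemma tonelli1 {d : ℕ} {G : (Fin d → ℝ) → ℝ≥0∞} (hG : Measurable G) (hp : ZPeriodic G)
    {s : ℝ} (hs : 0 < s) (hs1 : s ≤ 1) (x : Fin d → ℝ) :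
    ∫⁻ y, ENNReal.ofReal (wt d y) * G (x + s • y) ≤
      ENNReal.ofReal ((s ^ d)⁻¹) * (ENNReal.ofReal (2 ^ ((d:ℝ) + 2) * ∫ z, wt d z)
        * ∫⁻ z, G z ∂(torusMeasure d)) := by
  have mw : Measurable fun y : Fin d → ℝ => ENNReal.ofReal (wt d y) :=
    continuous_wt.measurable.ennreal_ofReal
  have mF : Measurable fun y : Fin d → ℝ => ENNReal.ofReal (wt d y) * G (x + y) :=
    mw.mul (hG.comp (by fun_prop))
  calc ∫⁻ y, ENNReal.ofReal (wt d y) * G (x + s • y)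
      ≤ ∫⁻ y, ENNReal.ofReal (wt d (s • y)) * G (x + s • y) := by
        apply lintegral_mono
        intro y
        dsimp only
        gcongr
        apply wt_anti
        rw [norm_smul, Real.norm_of_nonneg hs.le]
        nlinarith [norm_nonneg y]
    _ = ENNReal.ofReal ((s ^ d)⁻¹) * ∫⁻ y, ENNReal.ofReal (wt d y) * G (x + y) := by
        rw [← lintegral_map (f := fun y => ENNReal.ofReal (wt d y) * G (x + y))
          (g := fun y => s • y) mF (by fun_prop), Measure.map_addHaar_smul _ hs.ne',
          lintegral_smul_measure]
        simp [abs_of_pos hs]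
    _ ≤ _ := by
        gcongr
        exact tonelli0 hG hp x

lemma young_pt {t l q : ℝ} (ht : 0 ≤ t) (hl : 0 < l) (hq : 1 ≤ q) :
    t ≤ l + l ^ (1 - q) * t ^ q := by
  by_cases h : t ≤ l
  · have : 0 ≤ l ^ (1 - q) * t ^ q := by positivity
    linarith
  · push Not at h
    have ht0 : 0 < t := hl.trans h
    have h1 : t = t ^ (1 - q) * t ^ q := by
      rw [← Real.rpow_add ht0]; simp
    have h2 : t ^ (1 - q) ≤ l ^ (1 - q) := Real.rpow_le_rpow_of_nonpos hl h.le (by linarith)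
    have h3 : 0 ≤ t ^ q := by positivity
    nlinarith

lemma Kc_Lp {d : ℕ} (p : MvPolynomial (Fin d) ℝ) {q : ℝ} (hq : 1 ≤ q) :
    ∃ C : ℝ, 0 < C ∧ ∀ (f : (Fin d → ℝ) → ℝ) (N : ℝ), Measurable f → ZPeriodic f →
      0 < N → ∫⁻ z, ENNReal.ofReal (|f z| ^ q) ∂(torusMeasure d) ≤ ENNReal.ofReal (N ^ q) →
      ∀ s, 0 < s → s ≤ 1 → ∀ x, |Kc p s f x| ≤ C * (N * s ^ (-((d:ℝ) / q))) := by
  obtain ⟨C, hC, h⟩ := gW_dec p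
  set A := ∫ z, wt d z with hA
  have hA0 : 0 ≤ A := integral_nonneg fun z => (wt_pos z).le
  set c : ℝ := 2 ^ ((d:ℝ) + 2) with hc
  have hc0 : 0 < c := by positivity
  refine ⟨C * (A + c * A) + 1, by positivity, fun f N hf hp hN hfN s hs hs1 x => ?_⟩
  set l := N * s ^ (-((d:ℝ) / q)) with hl
  have hl0 : 0 < l := by positivity
  have hq0 : q ≠ 0 := by linarith
  have hlq : (s ^ d)⁻¹ * N ^ q = l ^ q := by
    rw [hl, Real.mul_rpow hN.le (by positivity), ← Real.rpow_mul hs.le, neg_mul,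
      div_mul_cancel₀ _ hq0, Real.rpow_neg hs.le, Real.rpow_natCast]
    ring
  have mf : Measurable fun z : Fin d → ℝ => f (x + s • z) := hf.comp (by fun_prop)
  have e1 : ENNReal.ofReal |Kc p s f x| ≤ ENNReal.ofReal ((C * (A + c * A)) * l) := by
    calc ENNReal.ofReal |Kc p s f x| ≤ ∫⁻ z, ENNReal.ofReal |gW p z * f (x + s • z)| := by
          have := enorm_integral_le_lintegral_enorm (μ := volume) (fun z => gW p z * f (x + s • z))
          simp only [Real.enorm_eq_ofReal_abs] at this
          exact this
      _ ≤ ∫⁻ z, (ENNReal.ofReal (C * l) * ENNReal.ofReal (wt d z) +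
            ENNReal.ofReal (C * l ^ (1 - q)) * (ENNReal.ofReal (wt d z) *
              ENNReal.ofReal (|f (x + s • z)| ^ q))) := by
          apply lintegral_mono
          intro z
          dsimp only
          have hw := (wt_pos z).le
          rw [← ENNReal.ofReal_mul (by positivity), ← ENNReal.ofReal_mul hw,
            ← ENNReal.ofReal_mul (by positivity),
            ← ENNReal.ofReal_add (by positivity) (by positivity)]
          apply ENNReal.ofReal_le_ofReal
          rw [abs_mul]
          calc _ ≤ (C * wt d z) * (l + l ^ (1 - q) * |f (x + s • z)| ^ q) :=
                mul_le_mul (h z) (young_pt (abs_nonneg _) hl0 hq) (abs_nonneg _) (by positivity)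
            _ = _ := by ring
      _ = ENNReal.ofReal (C * l) * ENNReal.ofReal A + ENNReal.ofReal (C * l ^ (1 - q)) *
            ∫⁻ z, (ENNReal.ofReal (wt d z) * ENNReal.ofReal (|f (x + s • z)| ^ q)) := by
          have mw : Measurable fun y : Fin d → ℝ => ENNReal.ofReal (wt d y) :=
            continuous_wt.measurable.ennreal_ofReal
          rw [lintegral_add_left (mw.const_mul _), lintegral_const_mul _ mw, lintegral_const_mul,
            ← ofReal_integral_eq_lintegral_ofReal integrable_wt
              (Filter.Eventually.of_forall fun z => (wt_pos z).le)]
          exact mw.mul ((mf.abs.pow_const q).ennreal_ofReal)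
      _ ≤ ENNReal.ofReal (C * l) * ENNReal.ofReal A + ENNReal.ofReal (C * l ^ (1 - q)) *
            (ENNReal.ofReal ((s ^ d)⁻¹) * (ENNReal.ofReal (c * A)
        * ENNReal.ofReal (N ^ q))) := by
          gcongr
          refine (tonelli1 (G := fun z => ENNReal.ofReal (|f z| ^ q))
            ((hf.abs.pow_const q).ennreal_ofReal) (fun y k => by simp [hp y k]) hs hs1 x).trans ?_
          gcongr
      _ = _ := by
          rw [← ENNReal.ofReal_mul (by positivity), ← ENNReal.ofReal_mul (by positivity),
            ← ENNReal.ofReal_mul (by positivity), ← ENNReal.ofReal_mul (by positivity),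
            ← ENNReal.ofReal_add (by positivity) (by positivity)]
          congr 1
          have : l ^ (1 - q) * l ^ q = l := by
            rw [← Real.rpow_add hl0]; simp
          linear_combination (C * l ^ (1 - q) * c * A) * hlq + C * c * A * this
  rw [ENNReal.ofReal_le_ofReal_iff (by positivity)] at e1
  linarith

end PartThree

open MeasureTheory Real Set
open scoped ENNReal

section PartFour
open MvPolynomial

lemma gl {φ φ' B B' : ℝ → ℝ} {a b : ℝ} (hab : a ≤ b) (hφ : ∀ s, HasDerivAt φ (φ' s) s)
    (hBc : ContinuousOn B (Icc a b)) (hB : ∀ s ∈ Ioo a b, HasDerivAt B (B' s) s)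
    (h : ∀ s ∈ Ioo a b, |φ' s| ≤ B' s) : |φ b - φ a| ≤ B b - B a := by
  have hc : Continuous φ := continuous_iff_continuousAt.mpr fun s => (hφ s).continuousAt
  have h1 : MonotoneOn (fun s => B s - φ s) (Icc a b) := by
    apply monotoneOn_of_deriv_nonneg (convex_Icc a b) (hBc.sub hc.continuousOn)
    · intro s hs
      rw [interior_Icc] at hs
      exact ((hB s hs).sub (hφ s)).differentiableAt.differentiableWithinAt
    · intro s hs
      rw [interior_Icc] at hs
      rw [((hB s hs).sub (hφ s)).deriv]
      linarith [(abs_le.mp (h s hs)).2]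
  have h2 : MonotoneOn (fun s => B s + φ s) (Icc a b) := by
    apply monotoneOn_of_deriv_nonneg (convex_Icc a b) (hBc.add hc.continuousOn)
    · intro s hs
      rw [interior_Icc] at hs
      exact ((hB s hs).add (hφ s)).differentiableAt.differentiableWithinAt
    · intro s hs
      rw [interior_Icc] at hs
      rw [((hB s hs).add (hφ s)).deriv]
      linarith [(abs_le.mp (h s hs)).1]
  have h3 := h1 (left_mem_Icc.mpr hab) (right_mem_Icc.mpr hab) hab
  have h4 := h2 (left_mem_Icc.mpr hab) (right_mem_Icc.mpr hab) hab
  dsimp only at h3 h4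
  rw [abs_le]
  constructor <;> linarith

lemma Kc_path {d : ℕ} (p : MvPolynomial (Fin d) ℝ) {g : (Fin d → ℝ) → ℝ} (hg : SP g)
    (a b : Fin d → ℝ) (σ τ : ℝ) (t : ℝ) :
    HasDerivAt (fun t => ∫ z, gW p z * g (a + t • b + (σ + t * τ) • z))
      (∫ z, gW p z * fderiv ℝ g (a + t • b + (σ + t * τ) • z) (b + τ • z)) t := by
  obtain ⟨M, hM0, hM⟩ := hg.bdd
  choose M' hM0' hM' using fun k => (hg.pd k).bdd
  set L := d * ∑ k, M' k with hL
  have hsum : 0 ≤ ∑ k, M' k := Finset.sum_nonneg fun k _ => hM0' k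
  have hfd : ∀ x, ‖fderiv ℝ g x‖ ≤ L := fun x => fderiv_le_of_pd hsum fun k =>
    (hM' k x).trans (Finset.single_le_sum (f := M') (fun k _ => hM0' k) (Finset.mem_univ k))
  have hL0 : 0 ≤ L := by positivity
  obtain ⟨C, hC, hdec⟩ := gW_dec p
  have hgc := hg.cont
  have hfc : Continuous (fderiv ℝ g) := hg.c1.continuous_fderiv one_ne_zero
  have hwc := continuous_gW p
  refine (hasDerivAt_integral_of_dominated_loc_of_deriv_le (s := Set.univ)
    (F := fun t z => gW p z * g (a + t • b + (σ + t * τ) • z))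
    (F' := fun t z => gW p z * fderiv ℝ g (a + t • b + (σ + t * τ) • z) (b + τ • z))
    (bound := fun z => C * L * (‖b‖ + |τ|) * (wt d z * (1 + ‖z‖)))
    Filter.univ_mem ?_ ?_ ?_ ?_ ?_ ?_).2
  · exact Filter.Eventually.of_forall fun t => Continuous.aestronglyMeasurable (by fun_prop)
  · exact integrable_gW_mul p (Continuous.measurable (by fun_prop)) (fun z => hM _)
  · apply Continuous.aestronglyMeasurable
    apply hwc.mul
    apply Continuous.clm_apply
    · fun_prop
    · fun_prop
  · refine Filter.Eventually.of_forall fun z t _ => ?_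
    rw [norm_mul]
    have h1 : ‖fderiv ℝ g (a + t • b + (σ + t * τ) • z) (b + τ • z)‖
        ≤ L * ((‖b‖ + |τ|) * (1 + ‖z‖)) := by
      refine (ContinuousLinearMap.le_opNorm _ _).trans ?_
      have h2 : ‖b + τ • z‖ ≤ (‖b‖ + |τ|) * (1 + ‖z‖) := by
        refine (norm_add_le _ _).trans ?_
        rw [norm_smul, Real.norm_eq_abs]
        nlinarith [norm_nonneg b, norm_nonneg z, abs_nonneg τ,
          mul_nonneg (norm_nonneg b) (norm_nonneg z)]
      exact mul_le_mul (hfd _) h2 (norm_nonneg _) hL0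
    calc _ ≤ (C * wt d z) * (L * ((‖b‖ + |τ|) * (1 + ‖z‖))) :=
          mul_le_mul (hdec z) h1 (norm_nonneg _) (mul_nonneg hC.le (wt_pos z).le)
      _ = _ := by ring
  · exact integrable_wt_norm.const_mul _
  · refine Filter.Eventually.of_forall fun z t _ => ?_
    have h1 : HasDerivAt (fun t : ℝ => a + t • b + (σ + t * τ) • z) (b + τ • z) t := by
      have e1 : HasDerivAt (fun t : ℝ => t • b) ((1:ℝ) • b) t := (hasDerivAt_id t).smul_const b
      have e2 : HasDerivAt (fun t : ℝ => (σ + t * τ) • z) ((1 * τ) • z) t :=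
        (((hasDerivAt_id t).mul_const τ).const_add σ).smul_const z
      have := (e1.const_add a).fun_add e2
      simpa using this
    have h2 := ((hg.c1.differentiable one_ne_zero) (a + t • b + (σ + t * τ) • z)).hasFDerivAt
    exact (h2.comp_hasDerivAt t h1).const_mul _

lemma fderiv_eq_sum {d : ℕ} (f : (Fin d → ℝ) → ℝ) (x v : Fin d → ℝ) :
    fderiv ℝ f x v = ∑ i, v i * pd i f x := by
  have hv : v = ∑ i, v i • (Pi.single i 1 : Fin d → ℝ) := by
    ext j; simp [Finset.sum_apply, Pi.single_apply]
  conv_lhs => rw [hv]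
  simp [pd]

lemma SP.intg {d : ℕ} {f : (Fin d → ℝ) → ℝ} (hf : SP f) (p : MvPolynomial (Fin d) ℝ) (s : ℝ)
    (x : Fin d → ℝ) : Integrable (fun z => gW p z * f (x + s • z)) := by
  obtain ⟨M, hM0, hM⟩ := hf.bdd
  have := hf.cont
  exact integrable_gW_mul p (Continuous.measurable (by fun_prop)) (fun z => hM _)

lemma SP.stein {d : ℕ} {f : (Fin d → ℝ) → ℝ} (hf : SP f) (p : MvPolynomial (Fin d) ℝ) (k : Fin d)
    (s : ℝ) (x : Fin d → ℝ) : s * Kc p s (_root_.pd k f) x = Kc (sp k p) s f x := by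
  obtain ⟨M, hM0, hM⟩ := hf.bdd
  obtain ⟨M', hM0', hM'⟩ := (hf.pd k).bdd
  exact _root_.stein p hf.c1 k hM hM' s x

lemma Kc_lip {d : ℕ} (p : MvPolynomial (Fin d) ℝ) {g : (Fin d → ℝ) → ℝ} (hg : SP g) {s M : ℝ}
    (hM : 0 ≤ M) (h : ∀ k x, |Kc p s (pd k g) x| ≤ M) (x y : Fin d → ℝ) :
    |Kc p s g x - Kc p s g y| ≤ d * M * ‖x - y‖ := by
  have h1 := Kc_path p hg y (x - y) s 0
  have := gl (a := 0) (b := 1) (B := fun t => d * M * ‖x - y‖ * t)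
    (B' := fun t => d * M * ‖x - y‖) zero_le_one h1 (by fun_prop)
    (fun t _ => by simpa using (hasDerivAt_id t).const_mul (d * M * ‖x - y‖)) (fun t _ => by
      have e : ∫ z, gW p z * fderiv ℝ g (y + t • (x - y) + (s + t * 0) • z) (x - y + (0:ℝ) • z)
          = ∑ k, (x - y) k * Kc p s (pd k g) (y + t • (x - y)) := by
        simp only [mul_zero, add_zero, zero_smul, fderiv_eq_sum, Finset.mul_sum]
        rw [integral_finsetSum]
        · apply Finset.sum_congr rfl
          intro k _
          unfold Kc
          rw [← integral_const_mul]
          congr 1; ext z; ring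
        · intro k _
          have := ((hg.pd k).intg p s (y + t • (x - y))).const_mul ((x - y) k)
          refine this.congr (Filter.Eventually.of_forall fun z => ?_)
          dsimp only
          ring
      rw [e]
      refine (Finset.abs_sum_le_sum_abs _ _).trans ?_
      calc _ ≤ ∑ k : Fin d, ‖x - y‖ * M := by
            apply Finset.sum_le_sum
            intro k _
            rw [abs_mul]
            exact mul_le_mul (norm_le_pi_norm (x - y) k) (h k _) (abs_nonneg _) (norm_nonneg _)
        _ = _ := by simp; ring)
  simpa [Kc] using this

noncomputable def Zc (d : ℕ) : ℝ := ∫ z, gW (1 : MvPolynomial (Fin d) ℝ) z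

lemma Zc_pos (d : ℕ) : 0 < Zc d := by
  unfold Zc
  rw [integral_pos_iff_support_of_nonneg (fun z => by simp [gW]; positivity) (integrable_gW _)]
  have : Function.support (gW (1 : MvPolynomial (Fin d) ℝ)) = Set.univ := by
    ext z; simp [gW]
  rw [this]
  exact isOpen_univ.measure_pos _ ⟨0, trivial⟩

/-- normalized Gaussian -/
noncomputable def p0 (d : ℕ) : MvPolynomial (Fin d) ℝ := C ((Zc d)⁻¹)

lemma gW_p0 {d : ℕ} (z : Fin d → ℝ) : gW (p0 d) z = (Zc d)⁻¹ * gW 1 z := by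
  simp [gW, p0]

lemma int_p0 (d : ℕ) : ∫ z, gW (p0 d) z = 1 := by
  simp only [gW_p0]
  rw [integral_const_mul]
  exact inv_mul_cancel₀ (Zc_pos d).ne'

lemma Kc_zero {d : ℕ} (v : (Fin d → ℝ) → ℝ) (x : Fin d → ℝ) : Kc (p0 d) 0 v x = v x := by
  simp [Kc, integral_mul_const, int_p0]

lemma Kc_sum {d : ℕ} (p : MvPolynomial (Fin d) ℝ) {f : Fin d → (Fin d → ℝ) → ℝ}
    (hf : ∀ i, SP (f i)) (s : ℝ) (x : Fin d → ℝ) :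
    Kc p s (fun y => ∑ i, f i y) x = ∑ i, Kc p s (f i) x := by
  unfold Kc
  simp only [Finset.mul_sum]
  rw [integral_finsetSum]
  intro k _
  exact (hf k).intg p s x

lemma heat_deriv {d : ℕ} {v : (Fin d → ℝ) → ℝ} (hv : SP v) (x : Fin d → ℝ) (s : ℝ) :
    HasDerivAt (fun s => Kc (p0 d) s v x) (s * Kc (p0 d) s (lap v) x) s := by
  have h := Kc_path (p0 d) hv x 0 0 1 s
  simp only [smul_zero, add_zero, zero_add, mul_one, one_smul] at h
  have e : ∫ z, gW (p0 d) z * fderiv ℝ v (x + s • z) z = s * Kc (p0 d) s (lap v) x := by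
    have e1 : ∀ k, Kc (sp k (p0 d)) s (pd k v) x = ∫ z, gW (p0 d) z * (z k * pd k v (x + s • z)) := by
      intro k
      unfold Kc
      congr 1; ext z
      simp [gW, sp, p0]
      ring
    have e2 : lap v = fun y => ∑ i, pd i (pd i v) y := rfl
    rw [e2, Kc_sum _ (fun i => (hv.pd i).pd i), Finset.mul_sum]
    simp only [fun k => (hv.pd k).stein (p0 d) k s x, e1]
    rw [← integral_finsetSum]
    · congr 1; ext z
      rw [fderiv_eq_sum, Finset.mul_sum]
    · intro k _
      have := (hv.pd k).intg (sp k (p0 d)) s x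
      refine this.congr (Filter.Eventually.of_forall fun z => ?_)
      simp [gW, sp, p0]
      ring
  rw [e] at h
  exact h

lemma al_sup {d : ℕ} {α : ℝ} (hα : α ∈ Ioo (0:ℝ) 1) {v : (Fin d → ℝ) → ℝ} (hv : SP v) {K : ℝ}
    (h1 : ∀ s, 0 < s → s ≤ 1 → ∀ x, |Kc (p0 d) s (lap v) x| ≤ K * s ^ (α - 2)) (x : Fin d → ℝ) :
    |Kc (p0 d) 1 v x - v x| ≤ K / α := by
  have h0 := hα.1
  have := gl (a := 0) (b := 1) (B := fun s => K / α * s ^ α) (B' := fun s => K * s ^ (α - 1))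
    zero_le_one (heat_deriv hv x)
    (Continuous.continuousOn (by
      apply Continuous.mul continuous_const
      exact Real.continuous_rpow_const h0.le))
    (fun s hs => by
      have := (Real.hasDerivAt_rpow_const (x := s) (p := α) (Or.inl hs.1.ne')).const_mul (K / α)
      convert! this using 1
      field_simp)
    (fun s hs => by
      rw [abs_mul, abs_of_pos hs.1]
      calc _ ≤ s * (K * s ^ (α - 2)) := by
            have := h1 s hs.1 hs.2.le x
            gcongr
            exact hs.1.le
        _ = K * (s ^ (α - 2) * s) := by ring
        _ = _ := by rw [← Real.rpow_add_one hs.1.ne']; congr 2; ring)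
  simp only [Kc_zero] at this
  simpa [Real.zero_rpow h0.ne'] using this

lemma al_hol {d : ℕ} {α : ℝ} (hα : α ∈ Ioo (0:ℝ) 1) {v : (Fin d → ℝ) → ℝ} (hv : SP v) {K K' : ℝ}
    (hK : 0 ≤ K) (hK' : 0 ≤ K')
    (h1 : ∀ s, 0 < s → s ≤ 1 → ∀ x, |Kc (p0 d) s (lap v) x| ≤ K * s ^ (α - 2))
    (h2 : ∀ s, 0 < s → s ≤ 1 → ∀ k x, |Kc (p0 d) s (pd k (lap v)) x| ≤ K * s ^ (α - 3))
    (h3 : ∀ k x, |Kc (p0 d) 1 (pd k v) x| ≤ K') (x y : Fin d → ℝ) (hxy : ‖x - y‖ ≤ 1) :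
    |v x - v y| ≤ (2 * K / α + d * K / (1 - α) + d * K') * ‖x - y‖ ^ α := by
  have ha0 := hα.1
  have ha1 : 0 < 1 - α := by linarith [hα.2]
  by_cases hne : ‖x - y‖ = 0
  · have : x = y := by rwa [norm_eq_zero, sub_eq_zero] at hne
    subst this
    simp [Real.zero_rpow ha0.ne']
  have hr : 0 < ‖x - y‖ := lt_of_le_of_ne (norm_nonneg _) (Ne.symm hne)
  set r := ‖x - y‖ with hrdef
  have hd := fun s => (heat_deriv hv x s).sub (heat_deriv hv y s)
  have a1 := gl (a := 0) (b := r) (B := fun s => 2 * K / α * s ^ α)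
    (B' := fun s => 2 * K * s ^ (α - 1)) hr.le hd
    (Continuous.continuousOn (by
      apply Continuous.mul continuous_const
      exact Real.continuous_rpow_const ha0.le))
    (fun s hs => by
      have := (Real.hasDerivAt_rpow_const (x := s) (p := α) (Or.inl hs.1.ne')).const_mul (2 * K / α)
      convert! this using 1
      field_simp)
    (fun s hs => by
      have hs1 : s ≤ 1 := hs.2.le.trans hxy
      have e1 := h1 s hs.1 hs1 x
      have e2 := h1 s hs.1 hs1 y
      have e3 : s ^ (α - 1) = s ^ (α - 2) * s := by
        rw [← Real.rpow_add_one hs.1.ne']; congr 1; ring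
      rw [← mul_sub, abs_mul, abs_of_pos hs.1, e3]
      have := (abs_sub (Kc (p0 d) s (lap v) x) (Kc (p0 d) s (lap v) y)).trans (add_le_add e1 e2)
      nlinarith [hs.1])
  have a2 := gl (a := r) (b := 1) (B := fun s => -(d * K * r / (1 - α)) * s ^ (α - 1))
    (B' := fun s => d * K * r * s ^ (α - 2)) hxy hd
    (ContinuousOn.mul continuousOn_const
      (ContinuousOn.rpow_const continuousOn_id fun s hs => Or.inl (hr.trans_le hs.1).ne'))
    (fun s hs => by
      have := (Real.hasDerivAt_rpow_const (x := s) (p := α - 1)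
        (Or.inl (hr.trans hs.1).ne')).const_mul (-(d * K * r / (1 - α)))
      convert! this using 1
      rw [show α - 1 - 1 = α - 2 by ring]
      field_simp
      ring)
    (fun s hs => by
      have hs0 : 0 < s := hr.trans hs.1
      have e1 := Kc_lip (p0 d) hv.lap (s := s) (M := K * s ^ (α - 3)) (by positivity)
        (h2 s hs0 hs.2.le) x y
      have e3 : s ^ (α - 2) = s ^ (α - 3) * s := by
        rw [← Real.rpow_add_one hs0.ne']; congr 1; ring
      rw [← mul_sub, abs_mul, abs_of_pos hs0, e3]
      calc _ ≤ s * (d * (K * s ^ (α - 3)) * r) := by gcongr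
        _ = _ := by ring)
  have a3 := Kc_lip (p0 d) hv (s := 1) hK' h3 x y
  simp only [Pi.sub_apply, Kc_zero, Real.one_rpow, Real.zero_rpow ha0.ne'] at a1 a2
  have e4 : r * r ^ (α - 1) = r ^ α := by
    rw [mul_comm, ← Real.rpow_add_one hr.ne']; congr 1; ring
  have e5 : r ≤ r ^ α := by
    conv_lhs => rw [← Real.rpow_one r]
    exact Real.rpow_le_rpow_of_exponent_ge hr hxy hα.2.le
  have e6 : |Kc (p0 d) 1 v x - Kc (p0 d) 1 v y| ≤ d * K' * r ^ α := 
    a3.trans (by rw [← hrdef]; gcongr)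
  have e7 : -(d * K * r / (1 - α)) * 1 - -(d * K * r / (1 - α)) * r ^ (α - 1)
      ≤ d * K / (1 - α) * r ^ α := by
    rw [← e4]
    have : 0 ≤ d * K * r / (1 - α) := by positivity
    have e8 : -(d * K * r / (1 - α)) * 1 - -(d * K * r / (1 - α)) * r ^ (α - 1) =
      d * K / (1 - α) * (r * r ^ (α - 1)) - d * K * r / (1 - α) := by ring
    linarith
  rw [abs_le] at *
  constructor <;> nlinarith [a1.1, a1.2, a2.1, a2.2, e6.1, e6.2]

end PartFour

open MeasureTheory Real Set
open scoped ENNReal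

section PartFive
open MvPolynomial

noncomputable def cD (d : ℕ) : ℝ := (Zc d)⁻¹ * Real.exp (-(d:ℝ) / 2)

lemma cD_pos (d : ℕ) : 0 < cD d := by
  have := Zc_pos d
  unfold cD; positivity

lemma cD_le {d : ℕ} {z : Fin d → ℝ} (hz : z ∈ Tcube d) : cD d ≤ gW (p0 d) z := by
  rw [gW_p0]
  unfold cD
  have := Zc_pos d
  gcongr
  simp only [gW, map_one, one_mul]
  gcongr
  calc ∑ i, z i ^ 2 ≤ ∑ i : Fin d, (1:ℝ) := by
        apply Finset.sum_le_sum
        intro i _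
        have h := hz i (Set.mem_univ i)
        nlinarith [h.1, h.2]
    _ = d := by simp

lemma gW_p0_nonneg {d : ℕ} (z : Fin d → ℝ) : 0 ≤ gW (p0 d) z := by
  rw [gW_p0]
  have := Zc_pos d
  simp only [gW, map_one, one_mul]
  positivity

lemma doeblin1 {d : ℕ} {v : (Fin d → ℝ) → ℝ} (hv : SP v) {M : ℝ} (hM : ∀ x, v x ≤ M)
    (h0 : ∫ x, v x ∂(torusMeasure d) = 0) (x : Fin d → ℝ) :
    Kc (p0 d) 1 v x ≤ (1 - cD d) * M := by
  have hint : Integrable (fun z => gW (p0 d) z * (M - v (x + (1:ℝ) • z))) := by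
    have := ((integrable_gW (p0 d)).mul_const M).sub (hv.intg (p0 d) 1 x)
    refine this.congr (Filter.Eventually.of_forall fun z => ?_)
    simp; ring
  have hc := hv.cont
  obtain ⟨B, hB0, hB⟩ := hv.bdd
  have hvi : Integrable (fun z => v (x + z)) (torusMeasure d) := 
    Integrable.of_bound (C := B) (Continuous.aestronglyMeasurable (by fun_prop))
      (Filter.Eventually.of_forall fun z => hB _)
  have e1 : ∫ z, gW (p0 d) z * (M - v (x + (1:ℝ) • z)) = M - Kc (p0 d) 1 v x := by
    simp only [mul_sub]
    rw [integral_sub ((integrable_gW (p0 d)).mul_const M) (hv.intg (p0 d) 1 x), integral_mul_const,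
      int_p0, one_mul]
    rfl
  have e2 : ∫ z, gW (p0 d) z * (M - v (x + (1:ℝ) • z)) ∂(torusMeasure d) ≤
      ∫ z, gW (p0 d) z * (M - v (x + (1:ℝ) • z)) := 
    integral_mono_measure Measure.restrict_le_self
      (Filter.Eventually.of_forall fun z => mul_nonneg (gW_p0_nonneg z) (by linarith [hM (x + (1:ℝ) • z)]))
      hint
  have e3 : ∫ z, cD d * (M - v (x + z)) ∂(torusMeasure d) ≤ 
      ∫ z, gW (p0 d) z * (M - v (x + (1:ℝ) • z)) ∂(torusMeasure d) := by
    apply setIntegral_mono_on _ hint.integrableOn (measurableSet_tcube d)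
    · intro z hz
      rw [one_smul]
      have := hM (x + z)
      exact mul_le_mul_of_nonneg_right (cD_le hz) (by linarith)
    · exact ((integrable_const M).sub hvi).const_mul _
  have e4 : ∫ z, cD d * (M - v (x + z)) ∂(torusMeasure d) = cD d * M := by
    rw [integral_const_mul, integral_sub (integrable_const M) hvi, tor_shift hv.2, h0]
    simp
  linarith

lemma SP.neg {d : ℕ} {f : (Fin d → ℝ) → ℝ} (hf : SP f) : SP (fun x => - f x) :=
  ⟨hf.1.neg, fun x k => by simp [hf.2 x k]⟩

lemma doeblin {d : ℕ} {v : (Fin d → ℝ) → ℝ} (hv : SP v) {K : ℝ} 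
    (h0 : ∫ x, v x ∂(torusMeasure d) = 0) (hK : ∀ x, |Kc (p0 d) 1 v x - v x| ≤ K) (x : Fin d → ℝ) :
    |v x| ≤ K / cD d := by
  obtain ⟨x0, hx0⟩ := per_max (f := fun y => |v y|) (fun y k => by simp [hv.2 y k]) hv.cont.abs
  set M := |v x0|
  have hc := cD_pos d
  have a1 := doeblin1 hv (M := M) (fun y => (le_abs_self _).trans (hx0 y)) h0 x0
  have a2 := doeblin1 hv.neg (M := M) (fun y => (neg_le_abs _).trans (hx0 y))
    (by rw [integral_neg, h0, neg_zero]) x0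
  have a3 : Kc (p0 d) 1 (fun x => - v x) x0 = - Kc (p0 d) 1 v x0 := by
    simp [Kc, integral_neg]
  rw [a3] at a2
  have a4 : |Kc (p0 d) 1 v x0| ≤ (1 - cD d) * M := abs_le.mpr ⟨by linarith, a1⟩
  have a5 : M ≤ |Kc (p0 d) 1 v x0| + K := by
    have := hK x0
    have h6 := abs_sub_abs_le_abs_sub (v x0) (Kc (p0 d) 1 v x0)
    rw [abs_sub_comm] at h6
    linarith
  have : cD d * M ≤ K := by linarith
  refine (hx0 x).trans ?_
  rw [le_div_iff₀ hc]; linarith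

lemma glob {E : Type*} [SeminormedAddCommGroup E] {v : E → ℝ} {α A B : ℝ} (hα : 0 ≤ α) (hA : 0 ≤ A) (hB : ∀ x, |v x| ≤ B)
    (h : ∀ x y, ‖x - y‖ ≤ 1 → |v x - v y| ≤ A * ‖x - y‖ ^ α) (x y : E) :
    |v x - v y| ≤ (A + 2 * B) * ‖x - y‖ ^ α := by
  have hB0 := (abs_nonneg _).trans (hB x)
  by_cases hxy : ‖x - y‖ ≤ 1
  · refine (h x y hxy).trans ?_
    gcongr
    linarith
  · push Not at hxy
    have : 1 ≤ ‖x - y‖ ^ α := Real.one_le_rpow hxy.le hα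
    calc _ ≤ |v x| + |v y| := abs_sub _ _
      _ ≤ (A + 2 * B) * 1 := by linarith [hB x, hB y]
      _ ≤ _ := by gcongr

lemma lip_hol {E : Type*} [SeminormedAddCommGroup E] {v : E → ℝ} {α A B : ℝ} (hα : α ∈ Ioo (0:ℝ) 1) (hA : 0 ≤ A) (hB : ∀ x, |v x| ≤ B)
    (h : ∀ x y, |v x - v y| ≤ A * ‖x - y‖) (x y : E) :
    |v x - v y| ≤ (A + 2 * B) * ‖x - y‖ ^ α := by
  apply glob hα.1.le hA hB
  intro x y hxy
  refine (h x y).trans ?_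
  gcongr
  by_cases h0 : ‖x - y‖ = 0
  · rw [h0]; exact Real.rpow_nonneg le_rfl _
  · conv_lhs => rw [← Real.rpow_one ‖x - y‖]
    exact Real.rpow_le_rpow_of_exponent_ge (lt_of_le_of_ne (norm_nonneg _) (Ne.symm h0)) hxy hα.2.le

lemma stein_b {d : ℕ} (p : MvPolynomial (Fin d) ℝ) (k : Fin d) {f : (Fin d → ℝ) → ℝ} (hf : SP f) {s B : ℝ}
    (hs : 0 < s) {x : Fin d → ℝ}
    (h : |Kc (sp k p) s f x| ≤ B) : |Kc p s (pd k f) x| ≤ s⁻¹ * B := by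
  rw [← hf.stein p k s x, abs_mul, abs_of_pos hs] at h
  rw [inv_mul_eq_div, le_div_iff₀ hs]
  linarith

/-- a uniform constant for finitely many kernels -/
lemma unif_const {ι : Type*} [Fintype ι] {P : ι → ℝ → Prop} (h : ∀ i, ∃ C : ℝ, 0 < C ∧ P i C)
    (hm : ∀ i C C', C ≤ C' → P i C → P i C') : ∃ C : ℝ, 0 < C ∧ ∀ i, P i C := by
  choose C hC hP using h
  refine ⟨1 + ∑ i, C i, by have := Finset.sum_nonneg (fun i (_ : i ∈ Finset.univ) => (hC i).le); linarith, fun i => hm i _ _ ?_ (hP i)⟩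
  have := Finset.single_le_sum (f := C) (fun i _ => (hC i).le) (Finset.mem_univ i)
  linarith

lemma Kc_sup_unif {d : ℕ} {ι : Type*} [Fintype ι] (p : ι → MvPolynomial (Fin d) ℝ) :
    ∃ C : ℝ, 0 < C ∧ ∀ i, ∀ (f : (Fin d → ℝ) → ℝ) (M : ℝ), (∀ x, |f x| ≤ M) →
      ∀ s x, |Kc (p i) s f x| ≤ C * M := by
  apply unif_const (fun i => Kc_sup (p i))
  intro i C C' hC h f M hM s x
  have := (abs_nonneg _).trans (hM x)
  exact (h f M hM s x).trans (by gcongr)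

lemma Kc_hol_unif {d : ℕ} {ι : Type*} [Fintype ι] (p : ι → MvPolynomial (Fin d) ℝ) (k : ι → Fin d)
    {α : ℝ} (hα : α ∈ Ioo (0:ℝ) 1) :
    ∃ C : ℝ, 0 < C ∧ ∀ i, ∀ (f : (Fin d → ℝ) → ℝ) (M H : ℝ), Continuous f → (∀ x, |f x| ≤ M) → 
      0 ≤ H → (∀ x y, |f x - f y| ≤ H * ‖x - y‖ ^ α) →
      ∀ s, 0 < s → ∀ x, |Kc (sp (k i) (p i)) s f x| ≤ C * (H * s ^ α) := by
  apply unif_const (fun i => Kc_hol (p i) (k i) hα)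
  intro i C C' hC h f M H hc hM hH hf s hs x
  exact (h f M H hc hM hH hf s hs x).trans (by gcongr)

lemma Kc_Lp_unif {d : ℕ} {ι : Type*} [Fintype ι] (p : ι → MvPolynomial (Fin d) ℝ) {q : ℝ} (hq : 1 ≤ q) :
    ∃ C : ℝ, 0 < C ∧ ∀ i, ∀ (f : (Fin d → ℝ) → ℝ) (N : ℝ), Measurable f → ZPeriodic f →
      0 < N → ∫⁻ z, ENNReal.ofReal (|f z| ^ q) ∂(torusMeasure d) ≤ ENNReal.ofReal (N ^ q) →
      ∀ s, 0 < s → s ≤ 1 → ∀ x, |Kc (p i) s f x| ≤ C * (N * s ^ (-((d:ℝ) / q))) := by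
  apply unif_const (fun i => Kc_Lp (p i) hq)
  intro i C C' hC h f N h1 h2 h3 h4 s hs hs1 x
  exact (h f N h1 h2 h3 h4 s hs hs1 x).trans (by gcongr)

/-- kernels with at most three derivatives -/
noncomputable def kern (d : ℕ) : Unit ⊕ Fin d ⊕ (Fin d × Fin d) ⊕ (Fin d × Fin d × Fin d) → MvPolynomial (Fin d) ℝ
  | Sum.inl _ => p0 d
  | Sum.inr (Sum.inl i) => sp i (p0 d)
  | Sum.inr (Sum.inr (Sum.inl (i, j))) => sp i (sp j (p0 d))
  | Sum.inr (Sum.inr (Sum.inr (i, j, k))) => sp i (sp j (sp k (p0 d)))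

lemma apriori1 (d : ℕ) {α : ℝ} (hα : α ∈ Ioo (0:ℝ) 1) : ∃ C : ℝ, 0 < C ∧
    ∀ (u : (Fin d → ℝ) → ℝ) (M F : ℝ), SP u → (∀ x, |u x| ≤ M) → (∀ x, |lap u x| ≤ F) →
      (∀ x y, |u x - u y| ≤ C * (M + F) * ‖x - y‖ ^ α) ∧
      ∀ i, (∀ x, |pd i u x| ≤ C * (M + F)) ∧
        ∀ x y, |pd i u x - pd i u y| ≤ C * (M + F) * ‖x - y‖ ^ α := by
  obtain ⟨B, hB, hk⟩ := Kc_sup_unif (kern d)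
  have ha0 := hα.1
  have ha1 : 0 < 1 - α := by linarith [hα.2]
  set C1 := B + B / α with hC1
  set C2 := 2 * B / α + d * B / (1 - α) + d * B with hC2
  have hC1p : 0 < C1 := by positivity
  have hC2p : 0 ≤ C2 := by positivity
  refine ⟨d * C1 + 2 + C2 + 2 * C1, by positivity, ?_⟩
  intro u M F hu hM hF
  have hM0 := (abs_nonneg _).trans (hM 0)
  have hF0 := (abs_nonneg _).trans (hF 0)
  have hb : ∀ i, (∀ x, |pd i u x| ≤ C1 * (M + F)) ∧
        ∀ x y, |pd i u x - pd i u y| ≤ (C2 * (M + F) + 2 * (C1 * (M + F))) * ‖x - y‖ ^ α := by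
    intro i
    have k1 : ∀ s, 0 < s → s ≤ 1 → ∀ x, |Kc (p0 d) s (lap (pd i u)) x| ≤ (B * F) * s ^ (α - 2) := by
      intro s hs hs1 x
      rw [lap_pd hu]
      refine (stein_b _ i hu.lap hs (hk (Sum.inr (Sum.inl i)) _ F hF s x)).trans ?_
      rw [mul_comm]
      gcongr
      rw [← Real.rpow_neg_one]
      exact Real.rpow_le_rpow_of_exponent_ge hs hs1 (by linarith)
    have k2 : ∀ s, 0 < s → s ≤ 1 → ∀ k x, |Kc (p0 d) s (pd k (lap (pd i u))) x| ≤ (B * F) * s ^ (α - 3) := by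
      intro s hs hs1 k x
      rw [lap_pd hu]
      refine (stein_b _ k (hu.lap.pd i) hs (stein_b _ i hu.lap hs
        (hk (Sum.inr (Sum.inr (Sum.inl (i, k)))) _ F hF s x))).trans ?_
      rw [← mul_assoc, mul_comm]
      gcongr
      rw [← mul_inv, ← pow_two, ← Real.rpow_natCast, ← Real.rpow_neg hs.le]
      exact Real.rpow_le_rpow_of_exponent_ge hs hs1 (by push_cast; linarith)
    have k3 : ∀ k x, |Kc (p0 d) 1 (pd k (pd i u)) x| ≤ B * M := by
      intro k x
      have := (stein_b _ k (hu.pd i) one_pos (stein_b _ i hu one_pos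
        (hk (Sum.inr (Sum.inr (Sum.inl (i, k)))) _ M hM 1 x)))
      simpa using this
    have k4 : ∀ x, |Kc (p0 d) 1 (pd i u) x| ≤ B * M := by
      intro x
      have := stein_b _ i hu one_pos (hk (Sum.inr (Sum.inl i)) _ M hM 1 x)
      simpa using this
    have b1 : ∀ x, |pd i u x| ≤ C1 * (M + F) := by
      intro x
      have h1 := al_sup hα (hu.pd i) k1 x
      have h2 := k4 x
      have h3 := abs_sub_abs_le_abs_sub (pd i u x) (Kc (p0 d) 1 (pd i u) x)
      rw [abs_sub_comm] at h3
      have : B * F / α + B * M ≤ C1 * (M + F) := by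
        rw [hC1]
        have e : (B + B / α) * (M + F) = B * F / α + B * M + (B * F + B * M / α) := by ring
        rw [e]
        have : 0 ≤ B * F + B * M / α := by positivity
        linarith
      linarith
    refine ⟨b1, glob ha0.le (by positivity) b1 ?_⟩
    intro x y hxy
    refine (al_hol hα (hu.pd i) (by positivity) (by positivity) k1 k2 k3 x y hxy).trans ?_
    gcongr
    rw [hC2]
    have e : (2 * B / α + d * B / (1 - α) + d * B) * (M + F) = 2 * (B * F) / α + d * (B * F) / (1 - α) + d * (B * M)
      + (2 * (B * M) / α + d * (B * M) / (1 - α) + d * (B * F)) := by ring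
    rw [e]
    have : 0 ≤ (2 * (B * M) / α + d * (B * M) / (1 - α) + d * (B * F)) := by positivity
    linarith
  refine ⟨?_, fun i => ⟨fun x => ((hb i).1 x).trans ?_, fun x y => ((hb i).2 x y).trans ?_⟩⟩
  · intro x y
    refine (lip_hol hα (A := d * (C1 * (M + F))) (by positivity) hM
      (lip_of_pd (hu.c1.differentiable one_ne_zero) (by positivity) (fun k => (hb k).1)) x y).trans ?_
    gcongr
    have e : (d * C1 + 2 + C2 + 2 * C1) * (M + F) = d * (C1 * (M + F)) + 2 * M + (2 * F + C2 * (M + F) + 2 * (C1 * (M + F))) := by ring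
    rw [e]
    have : 0 ≤ (2 * F + C2 * (M + F) + 2 * (C1 * (M + F))) := by positivity
    linarith
  · gcongr
    have : 0 ≤ d * C1 + 2 + C2 + C1 := by positivity
    linarith
  · gcongr
    rw [← sub_nonneg]
    have : 0 ≤ (d * C1 + 2) * (M + F) := by positivity
    linarith

lemma apriori2 (d : ℕ) {α : ℝ} (hα : α ∈ Ioo (0:ℝ) 1) : ∃ C : ℝ, 0 < C ∧
    ∀ (u : (Fin d → ℝ) → ℝ) (M H : ℝ), SP u → (∀ x, |u x| ≤ M) → 0 ≤ H →
      (∀ x y, |lap u x - lap u y| ≤ H * ‖x - y‖ ^ α) →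
      ∀ i j, (∀ x, |pd i (pd j u) x| ≤ C * (M + H)) ∧
        ∀ x y, |pd i (pd j u) x - pd i (pd j u) y| ≤ C * (M + H) * ‖x - y‖ ^ α := by
  obtain ⟨B1, hB1, hk⟩ := Kc_sup_unif (kern d)
  obtain ⟨B2, hB2, hh2⟩ := Kc_hol_unif (fun ij : Fin d × Fin d => sp ij.2 (p0 d)) (fun ij => ij.1) hα
  obtain ⟨B3, hB3, hh3⟩ := Kc_hol_unif (fun ij : Fin d × Fin d × Fin d => sp ij.2.1 (sp ij.2.2 (p0 d))) (fun ij => ij.1) hα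
  have ha0 := hα.1
  have ha1 : 0 < 1 - α := by linarith [hα.2]
  set B := B1 + B2 + B3 with hBd
  have hB : 0 < B := by positivity
  set C1 := B + B / α with hC1
  set C2 := 2 * B / α + d * B / (1 - α) + d * B with hC2
  have hC1p : 0 < C1 := by positivity
  have hC2p : 0 ≤ C2 := by positivity
  refine ⟨C2 + 2 * C1, by positivity, ?_⟩
  intro u M H hu hM hH0 hH
  have hM0 := (abs_nonneg _).trans (hM 0)
  obtain ⟨F, hF0, hF⟩ := hu.lap.bdd
  have hlc := hu.lap.cont
  have hb : ∀ i j, (∀ x, |pd i (pd j u) x| ≤ C1 * (M + H)) ∧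
        ∀ x y, |pd i (pd j u) x - pd i (pd j u) y| ≤ (C2 * (M + H) + 2 * (C1 * (M + H))) * ‖x - y‖ ^ α := by
    intro i j
    have k1 : ∀ s, 0 < s → s ≤ 1 → ∀ x, |Kc (p0 d) s (lap (pd i (pd j u))) x| ≤ (B * H) * s ^ (α - 2) := by
      intro s hs hs1 x
      rw [lap_pd (hu.pd j), lap_pd hu]
      refine (stein_b _ i (hu.lap.pd j) hs (stein_b _ j hu.lap hs
        (hh2 (j, i) _ F H hlc hF hH0 hH s hs x))).trans ?_
      have e : s⁻¹ * (s⁻¹ * (B2 * (H * s ^ α))) = B2 * H * s ^ (α - 2) := by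
        rw [show α - 2 = α - 1 - 1 by ring, Real.rpow_sub_one hs.ne', Real.rpow_sub_one hs.ne']
        ring
      rw [e]
      gcongr
      linarith
    have k2 : ∀ s, 0 < s → s ≤ 1 → ∀ k x, |Kc (p0 d) s (pd k (lap (pd i (pd j u)))) x| ≤ (B * H) * s ^ (α - 3) := by
      intro s hs hs1 k x
      rw [lap_pd (hu.pd j), lap_pd hu]
      refine (stein_b _ k ((hu.lap.pd j).pd i) hs (stein_b _ i (hu.lap.pd j) hs (stein_b _ j hu.lap hs
        (hh3 (j, i, k) _ F H hlc hF hH0 hH s hs x)))).trans ?_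
      have e : s⁻¹ * (s⁻¹ * (s⁻¹ * (B3 * (H * s ^ α)))) = B3 * H * s ^ (α - 3) := by
        rw [show α - 3 = α - 1 - 1 - 1 by ring, Real.rpow_sub_one hs.ne', Real.rpow_sub_one hs.ne',
          Real.rpow_sub_one hs.ne']
        ring
      rw [e]
      gcongr
      linarith
    have k3 : ∀ k x, |Kc (p0 d) 1 (pd k (pd i (pd j u))) x| ≤ B * M := by
      intro k x
      have := (stein_b _ k ((hu.pd j).pd i) one_pos (stein_b _ i (hu.pd j) one_pos (stein_b _ j hu one_pos
        (hk (Sum.inr (Sum.inr (Sum.inr (j, i, k)))) _ M hM 1 x))))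
      simp only [inv_one, one_mul] at this
      refine this.trans ?_
      gcongr; linarith
    have k4 : ∀ x, |Kc (p0 d) 1 (pd i (pd j u)) x| ≤ B * M := by
      intro x
      have := (stein_b _ i (hu.pd j) one_pos (stein_b _ j hu one_pos
        (hk (Sum.inr (Sum.inr (Sum.inl (j, i)))) _ M hM 1 x)))
      simp only [inv_one, one_mul] at this
      refine this.trans ?_
      gcongr; linarith
    have b1 : ∀ x, |pd i (pd j u) x| ≤ C1 * (M + H) := by
      intro x
      have h1 := al_sup hα ((hu.pd j).pd i) k1 x
      have h2 := k4 x
      have h3 := abs_sub_abs_le_abs_sub (pd i (pd j u) x) (Kc (p0 d) 1 (pd i (pd j u)) x)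
      rw [abs_sub_comm] at h3
      have : B * H / α + B * M ≤ C1 * (M + H) := by
        rw [hC1]
        have e : (B + B / α) * (M + H) = B * H / α + B * M + (B * H + B * M / α) := by ring
        rw [e]
        have : 0 ≤ B * H + B * M / α := by positivity
        linarith
      linarith
    refine ⟨b1, glob ha0.le (by positivity) b1 ?_⟩
    intro x y hxy
    refine (al_hol hα ((hu.pd j).pd i) (by positivity) (by positivity) k1 k2 k3 x y hxy).trans ?_
    gcongr
    rw [hC2]
    have e : (2 * B / α + d * B / (1 - α) + d * B) * (M + H) = 2 * (B * H) / α + d * (B * H) / (1 - α) + d * (B * M)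
      + (2 * (B * M) / α + d * (B * M) / (1 - α) + d * (B * H)) := by ring
    rw [e]
    have : 0 ≤ (2 * (B * M) / α + d * (B * M) / (1 - α) + d * (B * H)) := by positivity
    linarith
  intro i j
  refine ⟨fun x => ((hb i j).1 x).trans ?_, fun x y => ((hb i j).2 x y).trans ?_⟩
  · gcongr
    linarith
  · gcongr
    linarith

/-- estimate for mean-zero functions whose Laplacian has small Gaussian averages -/
lemma apriori0 (d : ℕ) {α : ℝ} (hα : α ∈ Ioo (0:ℝ) 1) : ∃ C : ℝ, 0 < C ∧
    ∀ (v : (Fin d → ℝ) → ℝ) (K : ℝ), SP v → 0 ≤ K → ∫ x, v x ∂(torusMeasure d) = 0 →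
      (∀ s, 0 < s → s ≤ 1 → ∀ x, |Kc (p0 d) s (lap v) x| ≤ K * s ^ (α - 2)) →
      (∀ s, 0 < s → s ≤ 1 → ∀ k x, |Kc (sp k (p0 d)) s (lap v) x| ≤ K * s ^ (α - 2)) →
      (∀ x, |v x| ≤ C * K) ∧ ∀ x y, |v x - v y| ≤ C * K * ‖x - y‖ ^ α := by
  obtain ⟨B, hB, hk⟩ := Kc_sup_unif (kern d)
  have ha0 := hα.1
  have ha1 : 0 < 1 - α := by linarith [hα.2]
  have hc := cD_pos d
  set S := 1 / α / cD d with hS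
  have hSp : 0 < S := by positivity
  set C2 := 2 / α + d / (1 - α) + d * (B * S) with hC2
  have hC2p : 0 ≤ C2 := by positivity
  refine ⟨C2 + 2 * S, by positivity, ?_⟩
  intro v K hv hK h0 k1 k2'
  have b1 : ∀ x, |v x| ≤ S * K := fun x => 
    (doeblin hv h0 (al_sup hα hv k1) x).trans (le_of_eq (by rw [hS]; ring))
  have k2 : ∀ s, 0 < s → s ≤ 1 → ∀ k x, |Kc (p0 d) s (pd k (lap v)) x| ≤ K * s ^ (α - 3) := by
    intro s hs hs1 k x
    refine (stein_b _ k hv.lap hs (k2' s hs hs1 k x)).trans (le_of_eq ?_)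
    rw [show α - 3 = α - 2 - 1 by ring, Real.rpow_sub_one hs.ne']
    ring
  have k3 : ∀ k x, |Kc (p0 d) 1 (pd k v) x| ≤ B * (S * K) := by
    intro k x
    have := stein_b _ k hv one_pos (hk (Sum.inr (Sum.inl k)) _ _ b1 1 x)
    simpa using this
  refine ⟨fun x => (b1 x).trans (by gcongr; linarith), fun x y => 
    (glob (A := C2 * K) ha0.le (by positivity) b1 ?_ x y).trans (by gcongr; linarith)⟩
  intro x y hxy
  refine (al_hol hα hv hK (by positivity) k1 k2 k3 x y hxy).trans ?_
  gcongr
  rw [hC2]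
  exact le_of_eq (by ring)

end PartFive

open MeasureTheory Real Set
open scoped ENNReal

section PartSix
open MvPolynomial

/-- mollifier kernels -/
structure Mol {d : ℕ} (κ : (Fin d → ℝ) → ℝ) : Prop where
  smooth : ContDiff ℝ (⊤ : ℕ∞) κ
  nonneg : ∀ z, 0 ≤ κ z
  int : ∫ z, κ z = 1
  supp : ∀ z, 1 / 8 ≤ ‖z‖ → κ z = 0

noncomputable def mol {d : ℕ} (κ f : (Fin d → ℝ) → ℝ) (x : Fin d → ℝ) : ℝ := ∫ w, κ w * f (x - w)

lemma mol_conv {d : ℕ} (κ f : (Fin d → ℝ) → ℝ) :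
    mol κ f = MeasureTheory.convolution κ f (ContinuousLinearMap.lsmul ℝ ℝ) volume := by
  ext x; rfl

lemma exists_mol (d : ℕ) : ∃ κ : ℕ → (Fin d → ℝ) → ℝ, (∀ n, Mol (κ n)) ∧
    ∀ f : (Fin d → ℝ) → ℝ, Continuous f → ∀ x, 
      Filter.Tendsto (fun n => mol (κ n) f x) Filter.atTop (nhds (f x)) := by
  let φ : ℕ → ContDiffBump (0 : Fin d → ℝ) := fun n =>
    { rIn := 1 / 16 / (n + 1), rOut := 1 / 8 / (n + 1)
      rIn_pos := by positivity
      rIn_lt_rOut := by gcongr; norm_num }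
  refine ⟨fun n => (φ n).normed volume, fun n => ⟨(φ n).contDiff_normed, (φ n).nonneg_normed, 
    (φ n).integral_normed, ?_⟩, ?_⟩
  · intro z hz
    have : z ∉ Function.support ((φ n).normed volume) := by
      rw [ContDiffBump.support_normed_eq]
      simp only [Metric.mem_ball, dist_zero_right, not_lt]
      refine le_trans ?_ hz
      change (1:ℝ) / 8 / (n + 1) ≤ 1 / 8
      apply div_le_self (by norm_num)
      have : (0:ℝ) ≤ n := by positivity
      linarith
    simpa using this
  · intro f hf x
    simp only [mol_conv]
    apply ContDiffBump.convolution_tendsto_right_of_continuous _ hf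
    change Filter.Tendsto (fun n : ℕ => (1:ℝ) / 8 / (n + 1)) Filter.atTop (nhds 0)
    have := (tendsto_one_div_add_atTop_nhds_zero_nat (𝕜 := ℝ)).const_mul (1 / 8)
    simpa [div_eq_mul_inv] using this

variable {d : ℕ} {κ : (Fin d → ℝ) → ℝ}

lemma Mol.cs (hκ : Mol κ) : HasCompactSupport κ := by
  apply HasCompactSupport.of_support_subset_isCompact (isCompact_closedBall (0 : Fin d → ℝ) (1 / 8))
  intro z hz
  by_contra h
  simp only [Metric.mem_closedBall, dist_zero_right, not_le] at h
  exact hz (hκ.supp z h.le)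

lemma Mol.integrable (hκ : Mol κ) : Integrable κ :=
  hκ.smooth.continuous.integrable_of_hasCompactSupport hκ.cs

lemma Mol.intg (hκ : Mol κ) {f : (Fin d → ℝ) → ℝ} (hf : Measurable f) {M : ℝ} (hM : ∀ x, |f x| ≤ M)
    (x : Fin d → ℝ) : Integrable (fun w => κ w * f (x - w)) :=
  hκ.integrable.mul_bdd (c := M) (hf.comp (measurable_const.sub measurable_id)).aestronglyMeasurable
    (Filter.Eventually.of_forall fun _ => hM _)

lemma mol_per {f : (Fin d → ℝ) → ℝ} (hf : ZPeriodic f) : ZPeriodic (mol κ f) := by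
  intro x k
  unfold mol
  congr 1; ext w
  rw [show x + latVec k - w = (x - w) + latVec k by abel, hf]

lemma mol_SP (hκ : Mol κ) {f : (Fin d → ℝ) → ℝ} (hf : Continuous f) (hp : ZPeriodic f) :
    SP (mol κ f) := by
  refine ⟨?_, mol_per hp⟩
  rw [mol_conv]
  exact hκ.cs.contDiff_convolution_left _ hκ.smooth hf.locallyIntegrable

lemma mol_sup (hκ : Mol κ) {f : (Fin d → ℝ) → ℝ} {M : ℝ} (hM : ∀ x, |f x| ≤ M) (x : Fin d → ℝ) :
    |mol κ f x| ≤ M := by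
  unfold mol
  rw [← Real.norm_eq_abs]
  refine (norm_integral_le_of_norm_le (hκ.integrable.mul_const M) (Filter.Eventually.of_forall fun w => ?_)).trans ?_
  · rw [norm_mul, Real.norm_of_nonneg (hκ.nonneg w)]
    exact mul_le_mul_of_nonneg_left (hM _) (hκ.nonneg w)
  · rw [integral_mul_const, hκ.int, one_mul]

lemma mol_hol (hκ : Mol κ) {f : (Fin d → ℝ) → ℝ} (hf : Continuous f) (hp : ZPeriodic f) {H α : ℝ} 
    (hH : ∀ x y, |f x - f y| ≤ H * ‖x - y‖ ^ α) (x y : Fin d → ℝ) :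
    |mol κ f x - mol κ f y| ≤ H * ‖x - y‖ ^ α := by
  obtain ⟨M, hM0, hM⟩ := per_bdd hp hf
  unfold mol
  rw [← integral_sub (hκ.intg hf.measurable hM x) (hκ.intg hf.measurable hM y)]
  rw [← Real.norm_eq_abs]
  refine (norm_integral_le_of_norm_le (hκ.integrable.mul_const (H * ‖x - y‖ ^ α)) (Filter.Eventually.of_forall fun w => ?_)).trans ?_
  · rw [← mul_sub, norm_mul, Real.norm_of_nonneg (hκ.nonneg w)]
    refine mul_le_mul_of_nonneg_left ((hH _ _).trans (le_of_eq ?_)) (hκ.nonneg w)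
    rw [sub_sub_sub_cancel_right]
  · rw [integral_mul_const, hκ.int, one_mul]

lemma pd_mol_right (hκ : Mol κ) {f : (Fin d → ℝ) → ℝ} (hf : ContDiff ℝ 1 f) (hp : ZPeriodic f)
    (i : Fin d) : pd i (mol κ f) = mol κ (pd i f) := by
  ext x
  have hc : Continuous (fderiv ℝ f) := hf.continuous_fderiv one_ne_zero
  obtain ⟨M, hM0, hM⟩ := per_bdd hp hf.continuous
  choose M' hM0' hM' using fun k => per_bdd (per_pd hp k) (show Continuous (pd k f) from hc.clm_apply continuous_const)
  set L := d * ∑ k, M' k with hL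
  have hsum : 0 ≤ ∑ k, M' k := Finset.sum_nonneg fun k _ => hM0' k
  have hfd : ∀ x, ‖fderiv ℝ f x‖ ≤ L := fun x => fderiv_le_of_pd hsum fun k =>
    (hM' k x).trans (Finset.single_le_sum (f := M') (fun k _ => hM0' k) (Finset.mem_univ k))
  have hκc := hκ.smooth.continuous
  have hfc := hf.continuous
  have hi : Integrable (fun w => κ w • fderiv ℝ f (x - w)) := by
    refine (hκ.integrable.mul_const L).mono' (Continuous.aestronglyMeasurable (by fun_prop)) 
      (Filter.Eventually.of_forall fun w => ?_)
    rw [norm_smul, Real.norm_of_nonneg (hκ.nonneg w)]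
    exact mul_le_mul_of_nonneg_left (hfd _) (hκ.nonneg w)
  have h : HasFDerivAt (fun x => ∫ w, κ w * f (x - w)) (∫ w, κ w • fderiv ℝ f (x - w)) x := by
    refine hasFDerivAt_integral_of_dominated_of_fderiv_le (s := Set.univ)
      (F := fun x w => κ w * f (x - w)) (F' := fun x w => κ w • fderiv ℝ f (x - w)) (bound := fun w => κ w * L) Filter.univ_mem
      ?_ ?_ ?_ ?_ ?_ ?_
    · exact Filter.Eventually.of_forall fun t => Continuous.aestronglyMeasurable (by fun_prop)
    · exact hκ.intg hfc.measurable hM x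
    · exact hi.aestronglyMeasurable
    · refine Filter.Eventually.of_forall fun w x _ => ?_
      rw [norm_smul, Real.norm_of_nonneg (hκ.nonneg w)]
      exact mul_le_mul_of_nonneg_left (hfd _) (hκ.nonneg w)
    · exact hκ.integrable.mul_const L
    · refine Filter.Eventually.of_forall fun w x _ => ?_
      have h1 := ((hf.differentiable one_ne_zero) (x - w)).hasFDerivAt
      have h2 := (h1.comp x ((hasFDerivAt_id x).sub_const w)).const_mul (κ w)
      simpa using h2
  have e : pd i (mol κ f) x = (∫ w, κ w • fderiv ℝ f (x - w)) (Pi.single i 1) := by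
    unfold pd
    rw [← h.fderiv]; rfl
  rw [e, ContinuousLinearMap.integral_apply hi]
  rfl

lemma pd_mol_left (hκ : Mol κ) {f : (Fin d → ℝ) → ℝ} (hf : Continuous f)
    (i : Fin d) : pd i (mol κ f) = mol (pd i κ) f := by
  ext x
  have hκ1 : ContDiff ℝ 1 κ := hκ.smooth.of_le (by exact_mod_cast le_top)
  have h := hκ.cs.hasFDerivAt_convolution_left (μ := volume) (ContinuousLinearMap.lsmul ℝ ℝ) hκ1 hf.locallyIntegrable x
  have hc : Continuous (fderiv ℝ κ) := hκ1.continuous_fderiv one_ne_zero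
  rw [← mol_conv] at h
  unfold pd
  rw [h.fderiv, convolution_def, ContinuousLinearMap.integral_apply]
  · rfl
  · apply Continuous.integrable_of_hasCompactSupport
    · apply Continuous.clm_apply
      · exact (ContinuousLinearMap.continuous _).comp hc
      · fun_prop
    · refine (hκ.cs.fderiv (𝕜 := ℝ)).mono ?_
      intro w hw hw0
      apply hw
      simp [hw0]

lemma Kc_mol (hκ : Mol κ) (p : MvPolynomial (Fin d) ℝ) (s : ℝ) {f : (Fin d → ℝ) → ℝ} (hf : Measurable f)
    {M : ℝ} (hM : ∀ x, |f x| ≤ M) {B : ℝ} (hB : ∀ x, |Kc p s f x| ≤ B) (x : Fin d → ℝ) : 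
    |Kc p s (mol κ f) x| ≤ B := by
  have e : Kc p s (mol κ f) x = mol κ (Kc p s f) x := by
    unfold Kc mol
    simp only [← integral_const_mul]
    rw [integral_integral_swap]
    · congr 1; ext w; congr 1; ext z
      rw [show x + s • z - w = x - w + s • z by abel]; ring
    · have h1 := (integrable_gW p).mul_prod hκ.integrable
      have hm : Measurable (fun q : (Fin d → ℝ) × (Fin d → ℝ) => f (x + s • q.1 - q.2)) :=
        hf.comp (by fun_prop)
      have := h1.mul_bdd (c := M) hm.aestronglyMeasurable (Filter.Eventually.of_forall fun _ => hM _)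
      refine this.congr (Filter.Eventually.of_forall fun q => ?_)
      simp [Function.uncurry]; ring
  rw [e]
  exact mol_sup hκ hB x

lemma mol_mean (hκ : Mol κ) {f : (Fin d → ℝ) → ℝ} (hf : Continuous f) (hp : ZPeriodic f) 
    (h0 : ∫ x, f x ∂(torusMeasure d) = 0) : ∫ x, mol κ f x ∂(torusMeasure d) = 0 := by
  obtain ⟨M, hM0, hM⟩ := per_bdd hp hf
  unfold mol
  rw [integral_integral_swap]
  · have : ∀ w, ∫ x, κ w * f (x - w) ∂(torusMeasure d) = 0 := by
      intro w
      have := tor_shift hp (-w)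
      rw [integral_const_mul]
      simp only [sub_eq_neg_add]
      rw [this, h0, mul_zero]
    simp [this]
  · have h1 := (integrable_const (μ := torusMeasure d) (1:ℝ)).mul_prod hκ.integrable
    have hm : Measurable (fun q : (Fin d → ℝ) × (Fin d → ℝ) => f (q.1 - q.2)) :=
        hf.measurable.comp (by fun_prop)
    have := h1.mul_bdd (c := M) hm.aestronglyMeasurable (Filter.Eventually.of_forall fun _ => hM _)
    refine this.congr (Filter.Eventually.of_forall fun q => ?_)
    simp [Function.uncurry]

noncomputable def rr (z : Fin d → ℝ) : Fin d → ℝ := fun i => z i - round (z i)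

lemma rr_per : ZPeriodic (rr : (Fin d → ℝ) → _) := by
  intro x k
  ext i
  simp [rr, latVec]

lemma rr_loc {η : (Fin d → ℝ) → ℝ} (hη : ∀ z, 1 / 4 ≤ ‖z‖ → η z = 0) (z0 z : Fin d → ℝ)
    (hz : ‖z - z0‖ < 1 / 4) : η (rr z) = η (z - fun i => (round (z0 i) : ℝ)) := by
  by_cases h : ∀ i, round (z i) = round (z0 i)
  · congr 1; ext i; simp [rr, h]
  · push Not at h
    obtain ⟨i, hi⟩ := h
    have hzi : |z i - z0 i| < 1 / 4 := (norm_le_pi_norm (z - z0) i).trans_lt hz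
    have e1 := abs_sub_round (z0 i)
    have e0 := abs_sub_round (z i)
    have hne : 1 ≤ |(round (z i) : ℝ) - round (z0 i)| := by
      have : 1 ≤ |round (z i) - round (z0 i)| := Int.one_le_abs (sub_ne_zero.mpr hi)
      exact_mod_cast this
    rw [hη, hη]
    · refine le_trans ?_ (norm_le_pi_norm _ i)
      simp only [Pi.sub_apply, Real.norm_eq_abs]
      have := abs_sub_le (round (z i) : ℝ) (z i) (round (z0 i))
      rw [abs_sub_comm (round (z i) : ℝ) (z i)] at this
      linarith
    · refine le_trans ?_ (norm_le_pi_norm _ i)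
      simp only [rr, Real.norm_eq_abs]
      have h1 := abs_sub_le (round (z i) : ℝ) (z i) (round (z0 i))
      have h2 := abs_sub_le (z i) (z0 i) (round (z0 i))
      rw [abs_sub_comm (round (z i) : ℝ) (z i)] at h1
      linarith

lemma rr_eq_aux {η : (Fin d → ℝ) → ℝ} (hη : ∀ z, 1 / 4 ≤ ‖z‖ → η z = 0) {w : Fin d → ℝ}
    (hw : ∀ i, |w i| ≤ 1 / 2) : η (rr w) = η w := by
  by_cases h : ∀ i, |w i| < 1 / 4
  · have : rr w = w := by
      ext i
      have h1 := abs_lt.mp (h i)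
      have : round (w i) = 0 := by
        rw [round_eq, Int.floor_eq_zero_iff]
        constructor <;> linarith
      simp [rr, this]
    rw [this]
  · push Not at h
    obtain ⟨i, hi⟩ := h
    have e0 := abs_sub_round (w i)
    rw [hη, hη]
    · exact hi.trans (norm_le_pi_norm w i)
    · refine le_trans ?_ (norm_le_pi_norm _ i)
      simp only [rr, Real.norm_eq_abs]
      by_cases hr : round (w i) = 0
      · simpa [hr] using hi
      · have : 1 ≤ |(round (w i) : ℝ)| := by exact_mod_cast Int.one_le_abs hr
        have h1 := abs_sub_abs_le_abs_sub (round (w i) : ℝ) (w i)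
        rw [abs_sub_comm] at h1
        linarith [hw i]

lemma rr_cell {η : (Fin d → ℝ) → ℝ} (hη : ∀ z, 1 / 4 ≤ ‖z‖ → η z = 0) {G : (Fin d → ℝ) → ℝ}
    (hG : ZPeriodic G) (x : Fin d → ℝ) : 
    ∫ y, η (rr (x - y)) * G y ∂(torusMeasure d) = mol η G x := by
  have hper : ZPeriodic (fun y => η (rr (x - y)) * G y) := by
    intro y k
    have h1 : rr (x - (y + latVec k)) = rr (x - y) := by
      have := rr_per (x - y) (-k)
      rw [← this]
      congr 1
      ext i; simp [latVec]; ring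
    simp only [h1, hG y k]
  set a : Fin d → ℝ := fun _ => 1 / 2 with ha
  rw [← tor_shift hper (x - a)]
  unfold torusMeasure
  rw [← integral_indicator (measurableSet_tcube d)]
  have : (Tcube d).indicator (fun z => η (rr (x - (x - a + z))) * G (x - a + z)) =
      fun z => η (a - z) * G (x - (a - z)) := by
    ext z
    rw [show x - (a - z) = x - a + z by abel]
    by_cases hz : z ∈ Tcube d
    · rw [indicator_of_mem hz, show x - (x - a + z) = a - z by abel, rr_eq_aux hη]
      · intro i
        have := hz i (Set.mem_univ i)
        simp only [ha, Pi.sub_apply]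
        rw [abs_le]
        constructor <;> linarith [this.1, this.2]
    · rw [indicator_of_notMem hz, hη, zero_mul]
      simp only [Tcube, Set.mem_univ_pi, not_forall] at hz
      obtain ⟨i, hi⟩ := hz
      refine le_trans ?_ (norm_le_pi_norm _ i)
      simp only [ha, Pi.sub_apply, Real.norm_eq_abs]
      by_contra hcon
      push Not at hcon
      rw [abs_lt] at hcon
      exact hi ⟨by linarith, by linarith⟩
  rw [this]
  unfold mol
  exact integral_sub_left_eq_self (fun w => η w * G (x - w)) volume a

end PartSix

open MeasureTheory Real Set
open scoped ENNReal

section PartSeven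
open MvPolynomial

variable {d : ℕ} {κ : (Fin d → ℝ) → ℝ}

lemma Mol.supp_pd (hκ : Mol κ) (i : Fin d) (z : Fin d → ℝ) (hz : 1 / 4 ≤ ‖z‖) : pd i κ z = 0 := by
  have : κ =ᶠ[nhds z] fun _ => 0 := by
    have ho : IsOpen {z : Fin d → ℝ | 1 / 8 < ‖z‖} := isOpen_lt continuous_const continuous_norm
    filter_upwards [ho.mem_nhds (show (1:ℝ) / 8 < ‖z‖ by linarith)] with y hy
    exact hκ.supp y (le_of_lt hy)
  unfold pd
  rw [this.fderiv_eq]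
  simp

lemma Mol.supp4 (hκ : Mol κ) (z : Fin d → ℝ) (hz : 1 / 4 ≤ ‖z‖) : κ z = 0 :=
  hκ.supp z (by linarith)

lemma rr_ev (hκ : Mol κ) (z0 : Fin d → ℝ) : (fun z => κ (rr z)) =ᶠ[nhds z0]
    fun z => κ (z - fun i => (round (z0 i) : ℝ)) := by
  filter_upwards [Metric.ball_mem_nhds z0 (show (0:ℝ) < 1 / 4 by norm_num)] with z hz
  exact rr_loc hκ.supp4 z0 z (by simpa [dist_eq_norm] using hz)

lemma rr_smooth (hκ : Mol κ) : ContDiff ℝ (⊤ : ℕ∞) (fun z => κ (rr z)) := by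
  rw [contDiff_iff_contDiffAt]
  intro z0
  refine ContDiffAt.congr_of_eventuallyEq ?_ (rr_ev hκ z0)
  exact (hκ.smooth.comp (contDiff_id.sub contDiff_const)).contDiffAt

lemma pd_rr (hκ : Mol κ) (i : Fin d) (z0 : Fin d → ℝ) : pd i (fun z => κ (rr z)) z0 = pd i κ (rr z0) := by
  unfold pd
  rw [(rr_ev hκ z0).fderiv_eq, fderiv_comp_sub]
  rfl

lemma weak_mol (hκ : Mol κ) {ε : ℝ} (hε : 0 < ε) {U G : (Fin d → ℝ) → ℝ} (hU : ContDiff ℝ 1 U)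
    (hUp : ZPeriodic U) (hGp : ZPeriodic G) (hw : IsWeakPoisson ε U G) :
    lap (mol κ U) = mol κ (fun y => (ε ^ 2)⁻¹ * G y) := by
  ext x
  have hc : Continuous (fderiv ℝ U) := hU.continuous_fderiv one_ne_zero
  have hpc : ∀ i, Continuous (pd i U) := fun i => hc.clm_apply continuous_const
  have e0 : lap (mol κ U) x = ∑ i, mol (pd i κ) (pd i U) x := by
    change ∑ i, pd i (pd i (mol κ U)) x = _
    apply Finset.sum_congr rfl
    intro i _
    rw [pd_mol_right hκ hU hUp, pd_mol_left hκ (hpc i)]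
  set φ : (Fin d → ℝ) → ℝ := fun y => κ (rr (x - y)) with hφ
  have hφs : ContDiff ℝ (⊤ : ℕ∞) φ := (rr_smooth hκ).comp (contDiff_const.sub contDiff_id)
  have hφp : ZPeriodic φ := by
    intro y k
    have h1 : rr (x - (y + latVec k)) = rr (x - y) := by
      have := rr_per (x - y) (-k)
      rw [← this]
      congr 1
      ext i; simp [latVec]; ring
    simp only [hφ, h1]
  have hpd : ∀ i y, pd i φ y = - pd i κ (rr (x - y)) := by
    intro i y
    rw [← pd_rr hκ]
    have hd := ((rr_smooth hκ).differentiable (by simp) (x - y)).hasFDerivAt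
    have := hd.comp y ((hasFDerivAt_id y).const_sub x)
    unfold pd
    have h2 : HasFDerivAt φ _ y := this
    rw [h2.fderiv]
    simp
  have h := hw φ hφs hφp
  have e1 : ∫ y, dotP (grad U y) (grad φ y) ∂(torusMeasure d) = - ∑ i, mol (pd i κ) (pd i U) x := by
    have : ∀ y, dotP (grad U y) (grad φ y) = ∑ i, -(pd i κ (rr (x - y)) * pd i U y) := by
      intro y
      unfold dotP
      apply Finset.sum_congr rfl
      intro i _
      change pd i U y * pd i φ y = _
      rw [hpd]; ring
    simp only [this]
    rw [integral_finsetSum]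
    · rw [← Finset.sum_neg_distrib]
      apply Finset.sum_congr rfl
      intro i _
      rw [integral_neg, rr_cell (hκ.supp_pd i) (per_pd hUp i)]
    · intro i _
      have hφ1 : SP φ := ⟨hφs, hφp⟩
      have hcc : Continuous (fun y => -(pd i κ (rr (x - y)) * pd i U y)) := by
        have : (fun y => -(pd i κ (rr (x - y)) * pd i U y)) = fun y => pd i φ y * pd i U y := by
          ext y; rw [hpd]; ring
        rw [this]
        exact (hφ1.pd i).cont.mul (hpc i)
      have hpp : ZPeriodic (fun y => -(pd i κ (rr (x - y)) * pd i U y)) := by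
        have : (fun y => -(pd i κ (rr (x - y)) * pd i U y)) = fun y => pd i φ y * pd i U y := by
          ext y; rw [hpd]; ring
        rw [this]
        intro y k
        simp only [(hφ1.pd i).2 y k, per_pd hUp i y k]
      obtain ⟨M, _, hM⟩ := per_bdd hpp hcc
      exact Integrable.of_bound (C := M) hcc.aestronglyMeasurable (Filter.Eventually.of_forall hM)
  have e2 : ∫ y, G y * φ y ∂(torusMeasure d) = mol κ G x := by
    rw [← rr_cell hκ.supp4 hGp]
    congr 1; ext y; rw [hφ]; ring
  rw [e1, e2] at h
  have e3 : mol κ (fun y => (ε ^ 2)⁻¹ * G y) x = (ε ^ 2)⁻¹ * mol κ G x := by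
    unfold mol
    rw [← integral_const_mul]
    congr 1; ext w; ring
  rw [e0, e3, eq_inv_mul_iff_mul_eq₀ (by positivity)]
  linarith

lemma Kc_const_mul (p : MvPolynomial (Fin d) ℝ) (s c : ℝ) (f : (Fin d → ℝ) → ℝ) (x : Fin d → ℝ) :
    Kc p s (fun y => c * f y) x = c * Kc p s f x := by
  unfold Kc
  rw [← integral_const_mul]
  congr 1; ext w; ring

lemma Kc_one_sub (p : MvPolynomial (Fin d) ℝ) (s : ℝ) {f : (Fin d → ℝ) → ℝ} (hf : Measurable f) {M : ℝ}
    (hM : ∀ x, |f x| ≤ M) (x : Fin d → ℝ) :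
    Kc p s (fun y => 1 - f y) x = Kc p s (fun _ => 1) x - Kc p s f x := by
  unfold Kc
  rw [← integral_sub]
  · congr 1; ext w; ring
  · simpa using integrable_gW p
  · exact integrable_gW_mul p (hf.comp (by fun_prop)) (fun z => hM _)

/-- estimate for Ubar, bounded density -/
lemma ubar_est0 (d : ℕ) {α q : ℝ} (hα : α ∈ Ioo (0:ℝ) 1) (hq : 1 ≤ q) (hαq : α - 2 ≤ -((d:ℝ) / q)) :
    ∃ C : ℝ, 0 < C ∧ ∀ (ε : ℝ), 0 < ε → ∀ (h U : (Fin d → ℝ) → ℝ) (N B : ℝ), Measurable h → ZPeriodic h →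
      (∀ x, |h x| ≤ B) → 0 < N →
      ∫⁻ z, ENNReal.ofReal (|h z| ^ q) ∂(torusMeasure d) ≤ ENNReal.ofReal (N ^ q) →
      ContDiff ℝ 1 U → ZPeriodic U → ∫ x, U x ∂(torusMeasure d) = 0 → 
      IsWeakPoisson ε U (fun x => 1 - h x) →
      (∀ x, |U x| ≤ C * ((1 + N) / ε ^ 2)) ∧
        ∀ x y, |U x - U y| ≤ C * ((1 + N) / ε ^ 2) * ‖x - y‖ ^ α := by
  obtain ⟨B1, hB1, hk1⟩ := Kc_sup_unif (kern d)
  obtain ⟨B2, hB2, hk2⟩ := Kc_Lp_unif (kern d) hq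
  obtain ⟨C, hC, hap⟩ := apriori0 d hα
  refine ⟨C * (B1 + B2), by positivity, ?_⟩
  intro ε hε h U N B hm hp hB hN hL hU hUp hU0 hw
  have hB0 : 0 ≤ B := (abs_nonneg _).trans (hB 0)
  have key : ∀ i s, 0 < s → s ≤ 1 → ∀ x, |Kc (kern d i) s (fun y => (ε ^ 2)⁻¹ * (1 - h y)) x| ≤ 
      ((B1 + B2) * ((1 + N) / ε ^ 2)) * s ^ (α - 2) := by
    intro i s hs hs1 x
    rw [Kc_const_mul, Kc_one_sub _ _ hm hB, abs_mul, abs_of_pos (show 0 < (ε ^ 2)⁻¹ by positivity)]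
    have a1 := hk1 i (fun _ => 1) 1 (by simp) s x
    have a2 := hk2 i h N hm hp hN hL s hs hs1 x
    have a3 : s ^ (-((d:ℝ) / q)) ≤ s ^ (α - 2) := Real.rpow_le_rpow_of_exponent_ge hs hs1 hαq
    have a4 : 1 ≤ s ^ (α - 2) := Real.one_le_rpow_of_pos_of_le_one_of_nonpos hs hs1 (by linarith [hα.2])
    have a5 : |Kc (kern d i) s (fun _ => 1) x - Kc (kern d i) s h x| ≤ (B1 + B2) * (1 + N) * s ^ (α - 2) := by
      refine (abs_sub _ _).trans ((add_le_add a1 a2).trans ?_)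
      calc B1 * 1 + B2 * (N * s ^ (-((d:ℝ) / q))) ≤ B1 * s ^ (α - 2) + B2 * (N * s ^ (α - 2)) := by gcongr
        _ ≤ B1 * s ^ (α - 2) + B2 * (N * s ^ (α - 2)) + (B1 * N + B2) * s ^ (α - 2) := by
          have : 0 ≤ (B1 * N + B2) * s ^ (α - 2) := by positivity
          linarith
        _ = _ := by ring
    calc _ ≤ (ε ^ 2)⁻¹ * ((B1 + B2) * (1 + N) * s ^ (α - 2)) := by gcongr
      _ = _ := by ring
  obtain ⟨κ, hκ, hlim⟩ := exists_mol d
  have hGm : Measurable (fun y => (ε ^ 2)⁻¹ * (1 - h y)) := by fun_prop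
  have hGp : ZPeriodic (fun y => 1 - h y) := fun y k => by simp only [hp y k]
  have hGb : ∀ y, |(ε ^ 2)⁻¹ * (1 - h y)| ≤ (ε ^ 2)⁻¹ * (1 + B) := by
    intro y
    rw [abs_mul, abs_of_pos (show 0 < (ε ^ 2)⁻¹ by positivity)]
    gcongr
    refine (abs_sub _ _).trans ?_
    simpa using hB y
  have hmain := fun n => hap (mol (κ n) U) ((B1 + B2) * ((1 + N) / ε ^ 2)) (mol_SP (hκ n) hU.continuous hUp)
    (by positivity) (mol_mean (hκ n) hU.continuous hUp hU0)
    (fun s hs hs1 x => by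
      rw [weak_mol (hκ n) hε hU hUp hGp hw]
      exact Kc_mol (hκ n) _ s hGm hGb (key (Sum.inl ()) s hs hs1) x)
    (fun s hs hs1 k x => by
      rw [weak_mol (hκ n) hε hU hUp hGp hw]
      exact Kc_mol (hκ n) _ s hGm hGb (key (Sum.inr (Sum.inl k)) s hs hs1) x)
  have hl := hlim U hU.continuous
  constructor
  · intro x
    rw [mul_assoc]
    exact le_of_tendsto (hl x).abs (Filter.Eventually.of_forall fun n => (hmain n).1 x)
  · intro x y
    rw [mul_assoc C]
    exact le_of_tendsto ((hl x).sub (hl y)).abs (Filter.Eventually.of_forall fun n => (hmain n).2 x y)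

lemma lap_mol (hκ : Mol κ) {u : (Fin d → ℝ) → ℝ} (hu : ContDiff ℝ 2 u) (hp : ZPeriodic u) :
    (∀ i, pd i (mol κ u) = mol κ (pd i u)) ∧ (∀ i j, pd i (pd j (mol κ u)) = mol κ (pd i (pd j u))) ∧
    lap (mol κ u) = mol κ (lap u) := by
  have hu1 : ContDiff ℝ 1 u := hu.of_le (by norm_num)
  have h1 : ∀ i, ContDiff ℝ 1 (pd i u) := fun i => 
    (hu.fderiv_right (m := 1) (by norm_num)).clm_apply contDiff_const
  have a1 : ∀ i, pd i (mol κ u) = mol κ (pd i u) := fun i => pd_mol_right hκ hu1 hp i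
  have a2 : ∀ i j, pd i (pd j (mol κ u)) = mol κ (pd i (pd j u)) := fun i j => by
    rw [a1, pd_mol_right hκ (h1 j) (per_pd hp j)]
  refine ⟨a1, a2, ?_⟩
  have hc : ∀ i, Continuous (pd i (pd i u)) := fun i =>
    ((h1 i).continuous_fderiv one_ne_zero).clm_apply continuous_const
  ext x
  change ∑ i, pd i (pd i (mol κ u)) x = ∫ w, κ w * ∑ i, pd i (pd i u) (x - w)
  simp only [Finset.mul_sum]
  rw [integral_finsetSum]
  · simp only [a2]
    rfl
  · intro i _
    obtain ⟨M, _, hM⟩ := per_bdd (per_pd (per_pd hp i) i) (hc i)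
    exact hκ.intg (hc i).measurable hM x

/-- a priori estimates for C² functions -/
lemma uhat_est (d : ℕ) {α : ℝ} (hα : α ∈ Ioo (0:ℝ) 1) : ∃ C : ℝ, 0 < C ∧
    ∀ (u : (Fin d → ℝ) → ℝ) (M F : ℝ), ContDiff ℝ 2 u → ZPeriodic u → (∀ x, |u x| ≤ M) → (∀ x, |lap u x| ≤ F) →
      ((∀ x y, |u x - u y| ≤ C * (M + F) * ‖x - y‖ ^ α) ∧
      ∀ i, (∀ x, |pd i u x| ≤ C * (M + F)) ∧
        ∀ x y, |pd i u x - pd i u y| ≤ C * (M + F) * ‖x - y‖ ^ α) ∧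
      ∀ H, 0 ≤ H → (∀ x y, |lap u x - lap u y| ≤ H * ‖x - y‖ ^ α) →
      ∀ i j, (∀ x, |pd i (pd j u) x| ≤ C * (M + H)) ∧
        ∀ x y, |pd i (pd j u) x - pd i (pd j u) y| ≤ C * (M + H) * ‖x - y‖ ^ α := by
  obtain ⟨C1, hC1, h1⟩ := apriori1 d hα
  obtain ⟨C2, hC2, h2⟩ := apriori2 d hα
  refine ⟨C1 + C2, by positivity, ?_⟩
  intro u M F hu hp hM hF
  have hM0 := (abs_nonneg _).trans (hM 0)
  have hF0 := (abs_nonneg _).trans (hF 0)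
  obtain ⟨κ, hκ, hlim⟩ := exists_mol d
  have huc := hu.continuous
  have hd1 : ∀ i, ContDiff ℝ 1 (pd i u) := fun i => 
    (hu.fderiv_right (m := 1) (by norm_num)).clm_apply contDiff_const
  have hc1 : ∀ i, Continuous (pd i u) := fun i => (hd1 i).continuous
  have hc2 : ∀ i j, Continuous (pd i (pd j u)) := fun i j =>
    ((hd1 j).continuous_fderiv one_ne_zero).clm_apply continuous_const
  have hlc : Continuous (lap u) := by
    change Continuous (fun x => ∑ i, pd i (pd i u) x)
    exact continuous_finsetSum _ fun i _ => hc2 i i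
  have hlp : ZPeriodic (lap u) := by
    intro x k
    change ∑ i, pd i (pd i u) _ = ∑ i, pd i (pd i u) _
    simp only [fun i => per_pd (per_pd hp i) i x k]
  have hS := fun n => mol_SP (hκ n) huc hp
  have hmain1 := fun n => h1 (mol (κ n) u) M F (hS n) (mol_sup (hκ n) hM)
    (fun x => by rw [(lap_mol (hκ n) hu hp).2.2]; exact mol_sup (hκ n) hF x)
  have L0 := hlim u huc
  have L1 : ∀ i x, Filter.Tendsto (fun n => pd i (mol (κ n) u) x) Filter.atTop (nhds (pd i u x)) := by
    intro i x
    simp only [fun n => (lap_mol (hκ n) hu hp).1 i]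
    exact hlim _ (hc1 i) x
  have L2 : ∀ i j x, Filter.Tendsto (fun n => pd i (pd j (mol (κ n) u)) x) Filter.atTop (nhds (pd i (pd j u) x)) := by
    intro i j x
    simp only [fun n => (lap_mol (hκ n) hu hp).2.1 i j]
    exact hlim _ (hc2 i j) x
  have m1 : C1 * (M + F) ≤ (C1 + C2) * (M + F) := by gcongr; linarith
  refine ⟨⟨fun x y => ?_, fun i => ⟨fun x => ?_, fun x y => ?_⟩⟩, fun H hH0 hH i j => ?_⟩
  · refine le_trans ?_ (mul_le_mul_of_nonneg_right m1 (by positivity))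
    exact le_of_tendsto ((L0 x).sub (L0 y)).abs (Filter.Eventually.of_forall fun n => (hmain1 n).1 x y)
  · refine le_trans ?_ m1
    exact le_of_tendsto (L1 i x).abs (Filter.Eventually.of_forall fun n => ((hmain1 n).2 i).1 x)
  · refine le_trans ?_ (mul_le_mul_of_nonneg_right m1 (by positivity))
    exact le_of_tendsto ((L1 i x).sub (L1 i y)).abs (Filter.Eventually.of_forall fun n => ((hmain1 n).2 i).2 x y)
  · have hmain2 := fun n => h2 (mol (κ n) u) M H (hS n) (mol_sup (hκ n) hM) hH0
      (fun x y => by rw [(lap_mol (hκ n) hu hp).2.2]; exact mol_hol (hκ n) hlc hlp hH x y) i j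
    have m2 : C2 * (M + H) ≤ (C1 + C2) * (M + H) := by gcongr; linarith
    refine ⟨fun x => ?_, fun x y => ?_⟩
    · refine le_trans ?_ m2
      exact le_of_tendsto (L2 i j x).abs (Filter.Eventually.of_forall fun n => (hmain2 n).1 x)
    · refine le_trans ?_ (mul_le_mul_of_nonneg_right m2 (by positivity))
      exact le_of_tendsto ((L2 i j x).sub (L2 i j y)).abs (Filter.Eventually.of_forall fun n => (hmain2 n).2 x y)

end PartSeven

open MeasureTheory Real Set
open scoped ENNReal

section PartEight

structure Hyp (d : ℕ) (ε : ℝ) (h Ubar Uhat : (Fin d → ℝ) → ℝ) : Prop where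
  hε : 0 < ε
  hm : Measurable h
  hp : ZPeriodic h
  h0 : ∀ x, 0 ≤ h x
  htop : MemLp h ⊤ (torusMeasure d)
  hLp : MemLp h (((d : ℝ≥0∞) + 2) / d) (torusMeasure d)
  b1 : ContDiff ℝ 1 Ubar
  bp : ZPeriodic Ubar
  bm : (∫ x, Ubar x ∂(torusMeasure d)) = 0
  bw : IsWeakPoisson ε Ubar (fun x => 1 - h x)
  u2 : ContDiff ℝ 2 Uhat
  up : ZPeriodic Uhat
  ueq : ∀ x, ε ^ 2 * lap Uhat x = Real.exp (Ubar x + Uhat x) - 1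

noncomputable def XX {d : ℕ} (ε : ℝ) (h : (Fin d → ℝ) → ℝ) : ℝ :=
  (1 + LpNorm (((d : ℝ≥0∞) + 2) / d) h) / ε ^ 2

lemma ubar_est (d : ℕ) (hd : d = 2 ∨ d = 3) {α : ℝ} (hα : α ∈ Aset d) :
    ∃ C : ℝ, 0 < C ∧ ∀ (ε : ℝ) (h U u : (Fin d → ℝ) → ℝ), Hyp d ε h U u →
      (∀ x, |U x| ≤ C * XX ε h) ∧
        ∀ x y, |U x - U y| ≤ C * XX ε h * ‖x - y‖ ^ α := by
  set q : ℝ := ((d:ℝ) + 2) / d with hq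
  have hα1 : α ∈ Ioo (0:ℝ) 1 := by
    rcases hd with rfl | rfl
    · simpa [Aset] using hα
    · simp only [Aset] at hα
      norm_num at hα
      exact ⟨hα.1, by linarith [hα.2]⟩
  have hd0 : (0:ℝ) < d := by rcases hd with rfl | rfl <;> norm_num
  have hq1 : 1 ≤ q := by rw [hq, le_div_iff₀ hd0]; linarith
  have hαq : α - 2 ≤ -((d:ℝ) / q) := by
    rcases hd with rfl | rfl
    · rw [hq]; norm_num; linarith [hα1.2]
    · simp only [Aset] at hα
      norm_num at hα
      rw [hq]; norm_num; linarith [hα.2]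
  obtain ⟨C, hC, hest⟩ := ubar_est0 d hα1 hq1 hαq
  refine ⟨2 * C, by positivity, ?_⟩
  intro ε h U u H
  have hε := H.hε
  set P : ℝ≥0∞ := ((d : ℝ≥0∞) + 2) / d with hP
  have hPr : P.toReal = q := by
    rw [hP, ENNReal.toReal_div, ENNReal.toReal_add (by simp) (by simp)]
    simp [hq]
  have hP0 : P ≠ 0 := by
    intro h0; rw [h0] at hPr; simp at hPr; linarith
  have hPt : P ≠ ⊤ := by
    intro h0; rw [h0] at hPr; simp at hPr; linarith
  set Lh := LpNorm P h with hLh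
  have hLh0 : 0 ≤ Lh := ENNReal.toReal_nonneg
  -- truncation
  set B : ℝ := (eLpNorm h ⊤ (torusMeasure d)).toReal with hB
  have hB0 : 0 ≤ B := ENNReal.toReal_nonneg
  have hae : ∀ᵐ x ∂(torusMeasure d), h x ≤ B := by
    filter_upwards [enorm_ae_le_eLpNormEssSup h (torusMeasure d)] with x hx
    rw [← eLpNorm_exponent_top] at hx
    have := (ENNReal.toReal_le_toReal (by simp) H.htop.eLpNorm_ne_top).mpr hx
    rw [toReal_enorm] at this
    exact (le_abs_self _).trans this
  set h' : (Fin d → ℝ) → ℝ := fun x => min (h x) B with hh'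
  have haeq : ∀ᵐ x ∂(torusMeasure d), h' x = h x := by
    filter_upwards [hae] with x hx
    exact min_eq_left hx
  have h1 : ∫⁻ z, ENNReal.ofReal (|h' z| ^ q) ∂(torusMeasure d) ≤ ENNReal.ofReal ((1 + Lh) ^ q) := by
    have e1 : ∫⁻ z, ENNReal.ofReal (|h' z| ^ q) ∂(torusMeasure d) = ∫⁻ z, ‖h z‖ₑ ^ q ∂(torusMeasure d) := by
      apply lintegral_congr_ae
      filter_upwards [haeq] with x hx
      rw [hx, ← ENNReal.ofReal_rpow_of_nonneg (abs_nonneg _) (by linarith), ← Real.enorm_eq_ofReal_abs]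
    have e2 : eLpNorm h P (torusMeasure d) = _ := eLpNorm_eq_lintegral_rpow_enorm_toReal hP0 hPt
    rw [hPr] at e2
    have e3 : ∫⁻ z, ‖h z‖ₑ ^ q ∂(torusMeasure d) = eLpNorm h P (torusMeasure d) ^ q := by
      rw [e2, ← ENNReal.rpow_mul, one_div, inv_mul_cancel₀ (by linarith), ENNReal.rpow_one]
    rw [e1, e3, ← ENNReal.ofReal_rpow_of_nonneg (by linarith) (by linarith)]
    apply ENNReal.rpow_le_rpow _ (by linarith)
    rw [← ENNReal.ofReal_toReal H.hLp.eLpNorm_ne_top]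
    apply ENNReal.ofReal_le_ofReal
    change Lh ≤ 1 + Lh
    linarith
  have hw' : IsWeakPoisson ε U (fun x => 1 - h' x) := by
    intro φ hφ hφp
    rw [H.bw φ hφ hφp]
    congr 1
    apply integral_congr_ae
    filter_upwards [haeq] with x hx
    rw [hx]
  have hfin := hest ε hε h' U (1 + Lh) B (H.hm.min measurable_const) (fun x k => by simp only [hh', H.hp x k])
    (fun x => by
      rw [abs_of_nonneg (le_min (H.h0 x) hB0)]
      exact min_le_right _ _) (by linarith) h1 H.b1 H.bp H.bm hw'
  have hle : C * ((1 + (1 + Lh)) / ε ^ 2) ≤ 2 * C * XX ε h := by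
    have hX : XX ε h = (1 + Lh) / ε ^ 2 := rfl
    rw [hX, show 2 * C * ((1 + Lh) / ε ^ 2) = C * ((2 * (1 + Lh)) / ε ^ 2) by ring]
    have : 1 + (1 + Lh) ≤ 2 * (1 + Lh) := by linarith
    exact mul_le_mul_of_nonneg_left (div_le_div_of_nonneg_right this (by positivity)) hC.le
  exact ⟨fun x => (hfin.1 x).trans hle, fun x y => (hfin.2 x y).trans
    (mul_le_mul_of_nonneg_right hle (by positivity))⟩

lemma pd_max {d : ℕ} {u : (Fin d → ℝ) → ℝ} (hu : ContDiff ℝ 2 u) {x : Fin d → ℝ} (hx : ∀ y, u y ≤ u x)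
    (i : Fin d) : pd i (pd i u) x ≤ 0 := by
  by_contra hcon
  push Not at hcon
  set e : Fin d → ℝ := Pi.single i 1 with he
  set g : ℝ → ℝ := fun t => u (x + t • e) with hg
  have hd : ∀ {f : (Fin d → ℝ) → ℝ}, ContDiff ℝ 1 f → ∀ t : ℝ, 
      HasDerivAt (fun t : ℝ => f (x + t • e)) (pd i f (x + t • e)) t := by
    intro f hf t
    have h1 : HasDerivAt (fun t : ℝ => x + t • e) e t := by
      simpa using ((hasDerivAt_id t).smul_const e).const_add x
    exact ((hf.differentiable one_ne_zero) (x + t • e)).hasFDerivAt.comp_hasDerivAt t h1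
  have hu1 : ContDiff ℝ 1 u := hu.of_le (by norm_num)
  have hd1 : ContDiff ℝ 1 (pd i u) := 
    (hu.fderiv_right (m := 1) (by norm_num)).clm_apply contDiff_const
  have g1 : deriv g = fun t => pd i u (x + t • e) := by
    ext t; exact (hd hu1 t).deriv
  have g2 : deriv (deriv g) 0 = pd i (pd i u) x := by
    rw [g1, (hd hd1 0).deriv]; simp
  have hmax : IsLocalMax g 0 := Filter.Eventually.of_forall fun t => by simpa [hg] using hx _
  have hmin := isLocalMin_of_deriv_deriv_pos (f := g) (x₀ := 0) (by rw [g2]; exact hcon) hmax.deriv_eq_zero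
    (hd hu1 0).continuousAt
  have hconst : g =ᶠ[nhds 0] fun _ => g 0 := by
    filter_upwards [hmax, hmin] with t h1 h2
    exact le_antisymm h1 h2
  have : deriv (deriv g) 0 = 0 := by
    rw [hconst.deriv.deriv_eq]
    simp
  rw [g2] at this
  linarith

lemma lap_max {d : ℕ} {u : (Fin d → ℝ) → ℝ} (hu : ContDiff ℝ 2 u) {x : Fin d → ℝ} (hx : ∀ y, u y ≤ u x) :
    lap u x ≤ 0 := Finset.sum_nonpos fun i _ => pd_max hu hx i

lemma lap_neg {d : ℕ} (u : (Fin d → ℝ) → ℝ) (x : Fin d → ℝ) : lap (fun y => - u y) x = - lap u x := by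
  simp only [lap, fderiv_fun_neg, neg_apply, Finset.sum_neg_distrib]

lemma max_pr {d : ℕ} {ε : ℝ} {h U u : (Fin d → ℝ) → ℝ} (H : Hyp d ε h U u) {M : ℝ}
    (hM : ∀ x, |U x| ≤ M) (x : Fin d → ℝ) : |u x| ≤ M := by
  have hε := H.hε
  rw [abs_le]
  constructor
  · obtain ⟨x0, hx0⟩ := per_max (f := fun y => - u y) (fun y k => by simp only [H.up y k]) H.u2.continuous.neg
    have h1 := lap_max H.u2.neg hx0
    rw [lap_neg] at h1
    have h2 := H.ueq x0
    have h3 : 1 ≤ Real.exp (U x0 + u x0) := by nlinarith [sq_nonneg ε]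
    have h4 : 0 ≤ U x0 + u x0 := by rwa [Real.one_le_exp_iff] at h3
    linarith [hx0 x, (abs_le.mp (hM x0)).2]
  · obtain ⟨x0, hx0⟩ := per_max H.up H.u2.continuous
    have h1 := lap_max H.u2 hx0
    have h2 := H.ueq x0
    have h3 : Real.exp (U x0 + u x0) ≤ 1 := by nlinarith [sq_nonneg ε]
    have h4 : U x0 + u x0 ≤ 0 := by rwa [Real.exp_le_one_iff] at h3
    linarith [hx0 x, (abs_le.mp (hM x0)).1]

lemma exp_lip {a b M : ℝ} (ha : a ≤ M) (hb : b ≤ M) : |Real.exp a - Real.exp b| ≤ Real.exp M * |a - b| := by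
  wlog hab : b ≤ a generalizing a b
  · rw [abs_sub_comm, abs_sub_comm a b]
    exact this hb ha (le_of_not_ge hab)
  rw [abs_of_nonneg (sub_nonneg.mpr (Real.exp_le_exp.mpr hab)), abs_of_nonneg (sub_nonneg.mpr hab)]
  have h1 := Real.add_one_le_exp (b - a)
  have h2 : Real.exp b = Real.exp a * Real.exp (b - a) := by rw [← Real.exp_add]; congr 1; ring
  have h3 : Real.exp a ≤ Real.exp M := Real.exp_le_exp.mpr ha
  have h4 := Real.exp_pos a
  rw [h2]
  nlinarith

lemma le_euclNorm {d : ℕ} (v : Fin d → ℝ) : ‖v‖ ≤ euclNorm v := by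
  unfold euclNorm
  rw [← Real.sqrt_sq (norm_nonneg v)]
  exact Real.sqrt_le_sqrt (norm_sq_le_sum v)

lemma td_transfer {d : ℕ} {α B : ℝ} (hα : 0 < α) (hB : 0 ≤ B) {D : (Fin d → ℝ) → (Fin d → ℝ) → ℝ}
    (hD0 : ∀ x y, 0 ≤ D x y) (hDp : ∀ x y k, D (x + latVec k) y = D x y)
    (hD : ∀ x y, D x y ≤ B * ‖x - y‖ ^ α) (x y : Fin d → ℝ) : D x y ≤ B * tdist x y ^ α := by
  rcases hB.eq_or_lt with rfl | hB
  · simpa using hD x y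
  have h1 : ∀ k : Fin d → ℤ, (D x y / B) ^ (1 / α) ≤ euclNorm (x - y + latVec k) := by
    intro k
    have h2 := hD (x + latVec k) y
    rw [hDp, show x + latVec k - y = x - y + latVec k by abel] at h2
    have h3 : D x y / B ≤ ‖x - y + latVec k‖ ^ α := by
      rw [div_le_iff₀ hB]; linarith
    calc (D x y / B) ^ (1 / α) ≤ (‖x - y + latVec k‖ ^ α) ^ (1 / α) := 
          Real.rpow_le_rpow (div_nonneg (hD0 x y) hB.le) h3 (by positivity)
      _ = ‖x - y + latVec k‖ := by
          rw [← Real.rpow_mul (norm_nonneg _), mul_one_div_cancel hα.ne', Real.rpow_one]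
      _ ≤ _ := le_euclNorm _
  have h2 : (D x y / B) ^ (1 / α) ≤ tdist x y := le_ciInf h1
  have h0 : 0 ≤ D x y / B := div_nonneg (hD0 x y) hB.le
  have h3 := Real.rpow_le_rpow (by positivity) h2 hα.le
  rw [← Real.rpow_mul h0, one_div_mul_cancel hα.ne', Real.rpow_one, div_le_iff₀ hB] at h3
  linarith

lemma euclNorm_le {d : ℕ} {v : Fin d → ℝ} {A : ℝ} (h : ∀ i, |v i| ≤ A) : euclNorm v ≤ d * A := by
  have h1 : ∑ i, |v i| ≤ d * A := (Finset.sum_le_sum fun i _ => h i).trans (by simp)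
  refine le_trans ?_ h1
  unfold euclNorm
  rw [Real.sqrt_le_left (Finset.sum_nonneg fun i _ => abs_nonneg _)]
  have := Finset.sum_sq_le_sq_sum_of_nonneg (s := Finset.univ) (f := fun i => |v i|) (fun i _ => abs_nonneg _)
  simpa using this

lemma frobNorm_le {d : ℕ} {v : Fin d → Fin d → ℝ} {A : ℝ} (h : ∀ i j, |v i j| ≤ A) : frobNorm v ≤ d * (d * A) := by
  have e : frobNorm v = euclNorm (fun i => euclNorm (v i)) := by
    unfold frobNorm euclNorm
    congr 1
    apply Finset.sum_congr rfl
    intro i _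
    rw [Real.sq_sqrt (Finset.sum_nonneg fun j _ => sq_nonneg _)]
  rw [e]
  apply euclNorm_le
  intro i
  rw [abs_of_nonneg (show 0 ≤ euclNorm (v i) from Real.sqrt_nonneg _)]
  exact euclNorm_le (h i)

lemma holderBnd_of {d : ℕ} {u : (Fin d → ℝ) → ℝ} (hp : ZPeriodic u) {α A B : ℝ} (hα : 0 < α) (hB : 0 ≤ B)
    (hA : ∀ x, |u x| ≤ A) (h : ∀ x y, |u x - u y| ≤ B * ‖x - y‖ ^ α) : HolderBnd α u (A + B) :=
  ⟨A, B, (abs_nonneg _).trans (hA 0), hB, le_rfl, hA, 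
    td_transfer (D := fun x y => |u x - u y|) hα hB (fun _ _ => abs_nonneg _) (fun x y k => by simp only [hp x k]) h⟩

lemma holderBndVec_of {d : ℕ} {u : (Fin d → ℝ) → ℝ} (hp : ZPeriodic u) {α A : ℝ} (hα : 0 < α) (hA0 : 0 ≤ A)
    (hA : ∀ i x, |pd i u x| ≤ A) (h : ∀ i x y, |pd i u x - pd i u y| ≤ A * ‖x - y‖ ^ α) : 
    HolderBndVec α (grad u) (2 * (d * A)) := by
  refine ⟨d * A, d * A, by positivity, by positivity, by linarith, fun x => euclNorm_le fun i => hA i x, ?_⟩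
  refine td_transfer (D := fun x y => euclNorm (grad u x - grad u y)) hα (by positivity) 
    (fun _ _ => Real.sqrt_nonneg _) (fun x y k => ?_) (fun x y => ?_)
  · have : grad u (x + latVec k) = grad u x := by
      ext i; exact per_pd hp i x k
    simp only [this]
  · rw [mul_assoc]
    exact euclNorm_le fun i => h i x y

lemma holderBndMat_of {d : ℕ} {u : (Fin d → ℝ) → ℝ} (hp : ZPeriodic u) {α A : ℝ} (hα : 0 < α) (hA0 : 0 ≤ A)
    (hA : ∀ i j x, |pd i (pd j u) x| ≤ A) (h : ∀ i j x y, |pd i (pd j u) x - pd i (pd j u) y| ≤ A * ‖x - y‖ ^ α) : 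
    HolderBndMat α (hess u) (2 * (d * (d * A))) := by
  refine ⟨d * (d * A), d * (d * A), by positivity, by positivity, by linarith, 
    fun x => frobNorm_le fun i j => hA i j x, ?_⟩
  refine td_transfer (D := fun x y => frobNorm (hess u x - hess u y)) hα (by positivity) 
    (fun _ _ => Real.sqrt_nonneg _) (fun x y k => ?_) (fun x y => ?_)
  · have : hess u (x + latVec k) = hess u x := by
      ext i j; exact per_pd (per_pd hp j) i x k
    simp only [this]
  · rw [mul_assoc, mul_assoc]
    exact frobNorm_le fun i j => h i j x y

end PartEight

open MeasureTheory Real Set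
open scoped ENNReal

section PartNine

lemma XX_pos {d : ℕ} {ε : ℝ} {h : (Fin d → ℝ) → ℝ} (hε : 0 < ε) : 0 < XX ε h ∧ 1 / ε ^ 2 ≤ XX ε h := by
  have h0 : 0 ≤ LpNorm (((d : ℝ≥0∞) + 2) / d) h := ENNReal.toReal_nonneg
  unfold XX
  exact ⟨by positivity, div_le_div_of_nonneg_right (by linarith) (by positivity)⟩

lemma lap_eq {d : ℕ} {ε : ℝ} {h U u : (Fin d → ℝ) → ℝ} (H : Hyp d ε h U u) (x : Fin d → ℝ) :
    lap u x = 1 / ε ^ 2 * (Real.exp (U x + u x) - 1) := by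
  have hε := H.hε
  rw [← H.ueq x]; field_simp

lemma sup_facts (d : ℕ) (hd : d = 2 ∨ d = 3) : ∃ c : ℝ, 0 < c ∧ ∀ (ε : ℝ) (h U u : (Fin d → ℝ) → ℝ),
    Hyp d ε h U u → (∀ x, |U x| ≤ c * XX ε h) ∧ (∀ x, |u x| ≤ c * XX ε h) ∧
      ∀ x, |lap u x| ≤ 2 * Real.exp ((2 * c + 1) * XX ε h) := by
  have h5 : (1 / 5 : ℝ) ∈ Aset d := by
    rcases hd with rfl | rfl <;> simp [Aset] <;> norm_num
  obtain ⟨c, hc, hest⟩ := ubar_est d hd h5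
  refine ⟨c, hc, fun ε h U u H => ?_⟩
  obtain ⟨hX, hXe⟩ := XX_pos (h := h) H.hε
  have h1 := (hest ε h U u H).1
  have h2 := max_pr H h1
  refine ⟨h1, h2, fun x => ?_⟩
  have hε := H.hε
  set X := XX ε h with hXd
  have e1 : Real.exp (U x + u x) ≤ Real.exp (2 * c * X) := Real.exp_le_exp.mpr (by
    linarith [(abs_le.mp (h1 x)).2, (abs_le.mp (h2 x)).2])
  have e2 : 1 ≤ Real.exp (2 * c * X) := Real.one_le_exp (by positivity)
  have e3 : |Real.exp (U x + u x) - 1| ≤ 2 * Real.exp (2 * c * X) := by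
    rw [abs_le]; constructor <;> linarith [Real.exp_pos (U x + u x)]
  have e4 : X ≤ Real.exp X := by linarith [Real.add_one_le_exp X]
  have e0 : 0 ≤ 1 / ε ^ 2 := by positivity
  rw [lap_eq H, abs_mul, abs_of_nonneg e0]
  calc 1 / ε ^ 2 * |Real.exp (U x + u x) - 1| ≤ Real.exp X * (2 * Real.exp (2 * c * X)) :=
        mul_le_mul (hXe.trans e4) e3 (abs_nonneg _) (Real.exp_pos _).le
    _ = 2 * Real.exp ((2 * c + 1) * X) := by
        rw [show (2 * c + 1) * X = X + 2 * c * X by ring, Real.exp_add]; ring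

lemma exp_up {a A X : ℝ} (h0 : 0 ≤ X) (ha : a ≤ A) (hA : 0 ≤ A) {k : ℝ} (hk : k ≤ A) :
    k * Real.exp (a * X) ≤ A * Real.exp (A * X) :=
  mul_le_mul hk (Real.exp_le_exp.mpr (mul_le_mul_of_nonneg_right ha h0)) (Real.exp_pos _).le hA

lemma final_a (d : ℕ) (hd : d = 2 ∨ d = 3) {α : ℝ} (hα : α ∈ Ioo (0:ℝ) 1) :
    ∃ C : ℝ, 0 < C ∧ ∀ (ε : ℝ) (h U u : (Fin d → ℝ) → ℝ), Hyp d ε h U u →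
      C1Bnd α u (C * Real.exp (C * XX ε h)) := by
  obtain ⟨c, hc, hs⟩ := sup_facts d hd
  obtain ⟨K, hK, hest⟩ := uhat_est d hα
  refine ⟨c + K * (c + 2) * (1 + 2 * d) + (2 * c + 1), by positivity, fun ε h U u H => ?_⟩
  obtain ⟨h1, h2, h3⟩ := hs ε h U u H
  obtain ⟨hX, hXe⟩ := XX_pos (h := h) H.hε
  set X := XX ε h with hXd
  set E := Real.exp ((2 * c + 1) * X) with hE
  have hE0 : 0 < E := Real.exp_pos _
  have hXE : X ≤ E := by
    have := Real.add_one_le_exp ((2 * c + 1) * X)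
    nlinarith [mul_pos hc hX]
  obtain ⟨⟨g1, g2⟩, -⟩ := hest u (c * X) (2 * E) H.u2 H.up h2 h3
  have hKM : 0 ≤ K * (c * X + 2 * E) := by positivity
  refine ⟨_, _, ?_, ?_, ?_, holderBnd_of H.up hα.1 hKM h2 g1,
    holderBndVec_of H.up hα.1 hKM (fun i => (g2 i).1) (fun i => (g2 i).2)⟩
  · positivity
  · positivity
  · have k1 : K * (c * X + 2 * E) ≤ K * (c + 2) * E := by
      have : c * X + 2 * E ≤ (c + 2) * E := by nlinarith
      calc _ ≤ K * ((c + 2) * E) := mul_le_mul_of_nonneg_left this hK.le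
        _ = _ := by ring
    calc c * X + K * (c * X + 2 * E) + 2 * (d * (K * (c * X + 2 * E)))
        ≤ c * E + K * (c + 2) * E + 2 * (d * (K * (c + 2) * E)) := by gcongr
      _ = (c + K * (c + 2) * (1 + 2 * d)) * E := by ring
      _ ≤ _ := by
        apply exp_up hX.le _ (by positivity) (by linarith)
        have : 0 ≤ c + K * (c + 2) * (1 + 2 * d) := by positivity
        linarith

lemma final_b (d : ℕ) (hd : d = 2 ∨ d = 3) {α : ℝ} (hα : α ∈ Ioo (0:ℝ) 1) (hα' : α ∈ Aset d) :
    ∃ C : ℝ, 0 < C ∧ ∀ (ε : ℝ) (h U u : (Fin d → ℝ) → ℝ), Hyp d ε h U u →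
      C2Bnd α u (C * Real.exp (C * XX ε h)) := by
  obtain ⟨c, hc, hs⟩ := sup_facts d hd
  obtain ⟨b, hb, hub⟩ := ubar_est d hd hα'
  obtain ⟨K, hK, hest⟩ := uhat_est d hα
  set c3 : ℝ := b + K * (c + 2) with hc3
  have hc30 : 0 < c3 := by positivity
  refine ⟨c + K * (c + 2) * (1 + 2 * d) + 2 * d * d * K * (c + c3) + 2 * (2 * c + 1), by positivity,
    fun ε h U u H => ?_⟩
  obtain ⟨h1, h2, h3⟩ := hs ε h U u H
  have hUH := (hub ε h U u H).2
  obtain ⟨hX, hXe⟩ := XX_pos (h := h) H.hε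
  set X := XX ε h with hXd
  set E := Real.exp ((2 * c + 1) * X) with hE
  have hE0 : 0 < E := Real.exp_pos _
  have hE1 : 1 ≤ E := Real.one_le_exp (by positivity)
  have hE2 : E ≤ E ^ 2 := by nlinarith
  have hXE : X ≤ E := by
    have := Real.add_one_le_exp ((2 * c + 1) * X)
    nlinarith [mul_pos hc hX]
  obtain ⟨⟨g1, g2⟩, g3⟩ := hest u (c * X) (2 * E) H.u2 H.up h2 h3
  have hKM : 0 ≤ K * (c * X + 2 * E) := by positivity
  have k1 : K * (c * X + 2 * E) ≤ K * (c + 2) * E := by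
    have : c * X + 2 * E ≤ (c + 2) * E := by nlinarith
    calc _ ≤ K * ((c + 2) * E) := mul_le_mul_of_nonneg_left this hK.le
      _ = _ := by ring
  have hlap : ∀ x y, |lap u x - lap u y| ≤ c3 * E ^ 2 * ‖x - y‖ ^ α := by
    intro x y
    have hle : ∀ z, U z + u z ≤ 2 * c * X := fun z => by
      linarith [(abs_le.mp (h1 z)).2, (abs_le.mp (h2 z)).2]
    have e1 := exp_lip (hle x) (hle y)
    have hr : 0 ≤ ‖x - y‖ ^ α := by positivity
    have e2 : |U x + u x - (U y + u y)| ≤ c3 * E * ‖x - y‖ ^ α := by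
      calc |U x + u x - (U y + u y)| = |(U x - U y) + (u x - u y)| := by congr 1; ring
        _ ≤ |U x - U y| + |u x - u y| := abs_add_le _ _
        _ ≤ b * X * ‖x - y‖ ^ α + K * (c * X + 2 * E) * ‖x - y‖ ^ α := add_le_add (hUH x y) (g1 x y)
        _ ≤ b * E * ‖x - y‖ ^ α + K * (c + 2) * E * ‖x - y‖ ^ α := by gcongr
        _ = _ := by rw [hc3]; ring
    have e0 : 0 ≤ 1 / ε ^ 2 := by positivity
    have e4 : X ≤ Real.exp X := by linarith [Real.add_one_le_exp X]
    rw [lap_eq H, lap_eq H, show ∀ a p q : ℝ, a * (p - 1) - a * (q - 1) = a * (p - q) by intros; ring,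
      abs_mul, abs_of_nonneg e0]
    calc 1 / ε ^ 2 * |Real.exp (U x + u x) - Real.exp (U y + u y)|
        ≤ Real.exp X * (Real.exp (2 * c * X) * (c3 * E * ‖x - y‖ ^ α)) :=
          mul_le_mul (hXe.trans e4) (e1.trans (mul_le_mul_of_nonneg_left e2 (Real.exp_pos _).le))
            (abs_nonneg _) (Real.exp_pos _).le
      _ = (Real.exp X * Real.exp (2 * c * X)) * (c3 * E * ‖x - y‖ ^ α) := by ring
      _ = E * (c3 * E * ‖x - y‖ ^ α) := by
          rw [← Real.exp_add, hE]; congr 2; ring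
      _ = _ := by ring
  have g4 := g3 (c3 * E ^ 2) (by positivity) hlap
  have hKH : 0 ≤ K * (c * X + c3 * E ^ 2) := by positivity
  refine ⟨_, _, _, ?_, ?_, ?_, ?_, holderBnd_of H.up hα.1 hKM h2 g1,
    holderBndVec_of H.up hα.1 hKM (fun i => (g2 i).1) (fun i => (g2 i).2),
    holderBndMat_of H.up hα.1 hKH (fun i j => (g4 i j).1) (fun i j => (g4 i j).2)⟩
  · positivity
  · positivity
  · positivity
  · have k2 : K * (c * X + c3 * E ^ 2) ≤ K * (c + c3) * E ^ 2 := by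
      have : c * X + c3 * E ^ 2 ≤ (c + c3) * E ^ 2 := by nlinarith
      calc _ ≤ K * ((c + c3) * E ^ 2) := mul_le_mul_of_nonneg_left this hK.le
        _ = _ := by ring
    have k3 : K * (c * X + 2 * E) ≤ K * (c + 2) * E ^ 2 :=
      k1.trans (mul_le_mul_of_nonneg_left hE2 (by positivity))
    have k4 : X ≤ E ^ 2 := hXE.trans hE2
    have k5 : E ^ 2 = Real.exp (2 * (2 * c + 1) * X) := by
      rw [hE, ← Real.exp_nat_mul]; congr 1; push_cast; ring
    calc c * X + K * (c * X + 2 * E) + 2 * (d * (K * (c * X + 2 * E)))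
          + 2 * (d * (d * (K * (c * X + c3 * E ^ 2))))
        ≤ c * E ^ 2 + K * (c + 2) * E ^ 2 + 2 * (d * (K * (c + 2) * E ^ 2))
          + 2 * (d * (d * (K * (c + c3) * E ^ 2))) := by gcongr
      _ = (c + K * (c + 2) * (1 + 2 * d) + 2 * d * d * K * (c + c3)) * E ^ 2 := by ring
      _ ≤ _ := by
        rw [k5]
        apply exp_up hX.le _ (by positivity) (by linarith)
        have : 0 ≤ c + K * (c + 2) * (1 + 2 * d) + 2 * d * d * K * (c + c3) := by positivity
        linarith

lemma C1Bnd.mono' {d : ℕ} {α K L : ℝ} {u : (Fin d → ℝ) → ℝ} (h : C1Bnd α u K) (hKL : K ≤ L) : C1Bnd α u L := by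
  obtain ⟨a, b, h1, h2, h3, h4⟩ := h
  exact ⟨a, b, h1, h2, h3.trans hKL, h4⟩

lemma C2Bnd.mono' {d : ℕ} {α K L : ℝ} {u : (Fin d → ℝ) → ℝ} (h : C2Bnd α u K) (hKL : K ≤ L) : C2Bnd α u L := by
  obtain ⟨a, b, c, h1, h2, h3, h4, h5⟩ := h
  exact ⟨a, b, c, h1, h2, h3, h4.trans hKL, h5⟩

end PartNine


open MeasureTheory Real Set
open scoped ENNReal

/-- Regularity of the smooth part `Û` of the electrostatic potential:
`C^{1,α}` and `C^{2,α}` estimates, with (iterated) exponential dependence on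
`ε^{-2}(1 + ‖h‖_{L^{(d+2)/d}})`, for `Û` solving `ε² Δ Û = e^{Ū+Û} − 1`, where `Ū` is the
zero-mean weak solution of `ε² Δ Ū = 1 − h`. -/
theorem statement3 (d : ℕ) (hd : d = 2 ∨ d = 3) (α : ℝ) :
    ∃ C : ℝ, 0 < C ∧
      ∀ ε : ℝ, 0 < ε →
      ∀ h Ubar Uhat : (Fin d → ℝ) → ℝ,
        Measurable h → ZPeriodic h → (∀ x, 0 ≤ h x) →
        (∫ x, h x ∂(torusMeasure d)) = 1 →
        MemLp h ⊤ (torusMeasure d) → MemLp h (((d : ℝ≥0∞) + 2) / d) (torusMeasure d) →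
        ContDiff ℝ 1 Ubar → ZPeriodic Ubar →
        (∫ x, Ubar x ∂(torusMeasure d)) = 0 →
        IsWeakPoisson ε Ubar (fun x => 1 - h x) →
        ContDiff ℝ 2 Uhat → ZPeriodic Uhat →
        (∀ x, ε ^ 2 * lap Uhat x = Real.exp (Ubar x + Uhat x) - 1) →
        (α ∈ Set.Ioo (0:ℝ) 1 →
          C1Bnd α Uhat
            (C * Real.exp (C / ε ^ 2 * (1 + LpNorm (((d : ℝ≥0∞) + 2) / d) h)))) ∧
        (α ∈ Aset d →
          C2Bnd α Uhat
            (C * Real.exp (Real.exp (C / ε ^ 2 *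
              (1 + LpNorm (((d : ℝ≥0∞) + 2) / d) h))))) := by
  by_cases hα : α ∈ Ioo (0:ℝ) 1
  swap
  · refine ⟨1, one_pos, ?_⟩
    intro ε hε h U u _ _ _ _ _ _ _ _ _ _ _ _ _
    refine ⟨fun h => absurd h hα, fun h => absurd ?_ hα⟩
    rcases hd with rfl | rfl
    · simpa [Aset] using h
    · simp only [Aset] at h
      norm_num at h
      exact ⟨h.1, by linarith [h.2]⟩
  obtain ⟨A, hA, ha⟩ := final_a d hd hα
  have hb : ∃ B : ℝ, 0 < B ∧ (α ∈ Aset d → ∀ (ε : ℝ) (h U u : (Fin d → ℝ) → ℝ), Hyp d ε h U u →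
      C2Bnd α u (B * Real.exp (B * XX ε h))) := by
    by_cases hα' : α ∈ Aset d
    · obtain ⟨B, hB, hb⟩ := final_b d hd hα hα'
      exact ⟨B, hB, fun _ => hb⟩
    · exact ⟨1, one_pos, fun h => absurd h hα'⟩
  obtain ⟨B, hB, hb⟩ := hb
  refine ⟨A + B, by positivity, ?_⟩
  intro ε hε h U u hm hp h0 _ htop hLp b1 bp bm bw u2 up ueq
  have H : Hyp d ε h U u := ⟨hε, hm, hp, h0, htop, hLp, b1, bp, bm, bw, u2, up, ueq⟩
  have hX := (XX_pos (h := h) hε).1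
  have e : (A + B) / ε ^ 2 * (1 + LpNorm (((d : ℝ≥0∞) + 2) / d) h) = (A + B) * XX ε h := by
    unfold XX; ring
  rw [e]
  refine ⟨fun _ => (ha ε h U u H).mono' ?_, fun hα' => (hb hα' ε h U u H).mono' ?_⟩
  · exact exp_up hX.le (by linarith) (by positivity) (by linarith)
  · refine (exp_up (A := A + B) hX.le (by linarith) (by positivity) (by linarith)).trans ?_
    refine mul_le_mul_of_nonneg_left (Real.exp_le_exp.mpr ?_) (by positivity)
    linarith [Real.add_one_le_exp ((A + B) * XX ε h)]
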